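/- Let A^(1), …, A^(L) ∈ ℝ^{n×n×n} be symmetric third-order tensors and let f(Q) = Σ_{ℓ=1}^L Σ_{k=1}^n (W^(ℓ)(Q)_{kkk})², where W^(ℓ)(Q)_{pqr} = Σ_{a,b,c} A^(ℓ)_{abc} Q_{ap} Q_{bq} Q_{cr}. Then for any starting point Q₀ ∈ O(n), every Jacobi-G sequence {Q_k} for f converges to a single limit point Q* ∈ O(n), and Q* is a stationary point of f restricted to O(n), i.e. ProjGrad f(Q*) = 0. -/

import Mathlib

open Matrix BigOperators Filter

/-- Frobenius norm of a real matrix. -/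
noncomputable def frobR {n : ℕ} (A : Matrix (Fin n) (Fin n) ℝ) : ℝ :=
  Real.sqrt (∑ i, ∑ j, (A i j) ^ 2)

/-- `g` is the Euclidean gradient of `f : ℝ^{n×n} → ℝ`. -/
def IsGradR {n : ℕ} (f : Matrix (Fin n) (Fin n) ℝ → ℝ)
    (g : Matrix (Fin n) (Fin n) ℝ → Matrix (Fin n) (Fin n) ℝ) : Prop :=
  ∀ Q H, HasDerivAt (fun t : ℝ => f (Q + t • H)) (∑ i, ∑ j, g Q i j * H i j) 0

/-- Riemannian (projected) gradient on O(n): `Q (Λ - Λᵀ)/2` with `Λ = Qᵀ ∇f(Q)`. -/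
noncomputable def projGradR {n : ℕ}
    (g : Matrix (Fin n) (Fin n) ℝ → Matrix (Fin n) (Fin n) ℝ)
    (Q : Matrix (Fin n) (Fin n) ℝ) : Matrix (Fin n) (Fin n) ℝ :=
  Q * ((1 / 2 : ℝ) • (Qᵀ * g Q - (Qᵀ * g Q)ᵀ))

/-- Givens rotation `G(i,j,θ)`: identity except `G_{ii} = G_{jj} = cos θ`,
`G_{ij} = −sin θ`, `G_{ji} = sin θ`. -/
noncomputable def givensR (n : ℕ) (i j : Fin n) (θ : ℝ) : Matrix (Fin n) (Fin n) ℝ :=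
  fun a b =>
    if a = i ∧ b = i then Real.cos θ
    else if a = j ∧ b = j then Real.cos θ
    else if a = i ∧ b = j then -Real.sin θ
    else if a = j ∧ b = i then Real.sin θ
    else if a = b then 1 else 0

/- The cost `f` is a polynomial, so it satisfies an integrated Kurdyka-Łojasiewicz inequality on
`O(n)`: below every level `c` there are `a < c` and a bounded monotone `Ψ` on `(a, c)` such that
`t - f Q ≤ ‖ProjGrad f(Q)‖ (Ψ t - Ψ (f Q))`. By quantifier elimination the points of `O(n)` at which
the projected gradient is smallest on a given level of `f` contain a semialgebraic curve
parametrised by the level. Its coordinates are monotone just below `c`, so it has a bounded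
arclength (in the `ℓ¹` norm), which serves as `Ψ` unless the gradient increases along the curve, in
which case a linear `Ψ` does.

Along a Givens rotation the cost is `h(t) = A + α cos 4t + β sin 4t`, and for the maximizer `θ` of
smallest absolute value `|h'(0)| |θ| ≤ 2 (h(θ) - h(0))`. With the choice of the pivot pairs and the
inequality above, `|θ k|` is at most a constant times `Ψ (f (Q (k + 1))) - Ψ (f (Q k))`, hence
summable, and `Q` is a Cauchy sequence. Its limit is stationary because `|h'(0)|` is at most a
constant times `|θ|`. -/

namespace JacobiG

open Set SignType Topology

section SignPatterns

theorem exists_orderIso_apply_eq_of_le {a b u v : ℝ} (hau : a < u) (huv : u ≤ v) (hvb : v < b) :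
    ∃ χ : ℝ ≃o ℝ, χ u = v ∧ ∀ y ∉ Ioo a b, χ y = y := by
  have hk₁ : 0 ≤ (v - u) / (u - a) := div_nonneg (by linarith) (by linarith)
  have hk₂ : 0 ≤ (v - u) / (b - u) := div_nonneg (by linarith) (by linarith)
  have hk₂' : (v - u) / (b - u) < 1 := (div_lt_one (by linarith)).2 (by linarith)
  have hu₁ : (v - u) / (u - a) * (u - a) = v - u := div_mul_cancel₀ _ (by linarith)
  have hu₂ : (v - u) / (b - u) * (b - u) = v - u := div_mul_cancel₀ _ (by linarith)
  set k₁ := (v - u) / (u - a)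
  set k₂ := (v - u) / (b - u)
  let bump : ℝ → ℝ := fun y => y + max 0 (min (k₁ * (y - a)) (k₂ * (b - y)))
  have bump_fix : ∀ y ∉ Ioo a b, bump y = y := by
    intro y hy
    refine add_eq_left.2 (max_eq_left ?_)
    rcases le_or_gt y a with h | h
    · exact (min_le_left _ _).trans (mul_nonpos_of_nonneg_of_nonpos hk₁ (by linarith))
    · have hby : b ≤ y := not_lt.1 fun hyb => hy ⟨h, hyb⟩
      exact (min_le_right _ _).trans (mul_nonpos_of_nonneg_of_nonpos hk₂ (by linarith))
  have bump_strictMono : StrictMono bump := by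
    intro y z hyz
    have hmax : max 0 (min (k₁ * (y - a)) (k₂ * (b - y))) ≤
        max 0 (min (k₁ * (z - a)) (k₂ * (b - z))) + k₂ * (z - y) := by
      have hslope : 0 ≤ k₂ * (z - y) := mul_nonneg hk₂ (by linarith)
      rw [← max_add_add_right, ← min_add_add_right]
      refine max_le_max (by linarith) (min_le_min ?_ (by linarith))
      nlinarith
    have : k₂ * (z - y) < z - y := mul_lt_of_lt_one_left (by linarith) hk₂'
    simp only [bump]
    linarith
  have bump_surjective : Function.Surjective bump := by
    refine Continuous.surjective (by fun_prop) ?_ ?_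
    · exact tendsto_atTop_mono (fun y => le_add_of_nonneg_right (le_max_left _ _)) tendsto_id
    · refine tendsto_id.congr' ?_
      filter_upwards [eventually_le_atBot a] with y hy
      exact (bump_fix y fun h => h.1.not_ge hy).symm
  refine ⟨bump_strictMono.orderIsoOfSurjective bump bump_surjective, ?_, bump_fix⟩
  change u + max 0 (min (k₁ * (u - a)) (k₂ * (b - u))) = v
  rw [hu₁, hu₂, min_self, max_eq_right (by linarith)]
  ring

theorem exists_orderIso_apply_eq {a b u v : ℝ} (hu : u ∈ Ioo a b) (hv : v ∈ Ioo a b) :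
    ∃ χ : ℝ ≃o ℝ, χ u = v ∧ ∀ y ∉ Ioo a b, χ y = y := by
  rcases le_total u v with h | h
  · exact exists_orderIso_apply_eq_of_le hu.1 h hv.2
  · obtain ⟨χ, hχ, hfix⟩ := exists_orderIso_apply_eq_of_le hv.1 h hu.2
    refine ⟨χ.symm, by rw [← hχ, χ.symm_apply_apply], fun y hy => ?_⟩
    rw [OrderIso.symm_apply_eq, hfix y hy]

theorem exists_gap_of_notMem {α : Type*} [LinearOrder α] (Z : Finset α) {z₀ z₁ y : α}
    (h₀ : z₀ ∈ Z) (h₁ : z₁ ∈ Z) (hy₀ : z₀ ≤ y) (hy₁ : y ≤ z₁) (hy : y ∉ Z) :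
    ∃ a ∈ Z, ∃ b ∈ Z, y ∈ Ioo a b ∧ ∀ z ∈ Z, z ∉ Ioo a b := by
  have hbelow : (Z.filter (· < y)).Nonempty :=
    ⟨z₀, Finset.mem_filter.2 ⟨h₀, hy₀.lt_of_ne fun h => hy (h ▸ h₀)⟩⟩
  have habove : (Z.filter (y < ·)).Nonempty :=
    ⟨z₁, Finset.mem_filter.2 ⟨h₁, hy₁.lt_of_ne fun h => hy (h ▸ h₁)⟩⟩
  obtain ⟨haZ, hay⟩ := Finset.mem_filter.1 (Finset.max'_mem _ hbelow)
  obtain ⟨hbZ, hyb⟩ := Finset.mem_filter.1 (Finset.min'_mem _ habove)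
  refine ⟨_, haZ, _, hbZ, ⟨hay, hyb⟩, fun z hz hz' => ?_⟩
  rcases lt_trichotomy z y with h | rfl | h
  · exact (Finset.le_max' _ z (Finset.mem_filter.2 ⟨hz, h⟩)).not_gt hz'.1
  · exact hy hz
  · exact (Finset.min'_le _ z (Finset.mem_filter.2 ⟨hz, h⟩)).not_gt hz'.2

variable {f g : ℝ → ℝ} {a b : ℝ}

theorem apply_neg_of_strictMonoOn {y : ℝ} (hf : ContinuousOn f (Icc a b))
    (hg : StrictMonoOn g (Icc a b)) (hb : sign (f b) = sign (g b))
    (hroot : ∀ z ∈ Ioo a b, f z = 0 → g z = 0) (hy : y ∈ Ioo a b) (hfy : f y < 0) : g y < 0 := by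
  have hymem := Ioo_subset_Icc_self hy
  rcases le_or_gt (f b) 0 with hfb | hfb
  · have hgb : g b ≤ 0 := by
      rw [← sign_nonpos_iff, ← hb, sign_nonpos_iff]; exact hfb
    exact (hg hymem (right_mem_Icc.2 (hy.1.trans hy.2).le) hy.2).trans_le hgb
  · obtain ⟨z, hz, hfz⟩ := intermediate_value_Ioo hy.2.le
      (hf.mono (Icc_subset_Icc_left hy.1.le)) ⟨hfy, hfb⟩
    have hz' : z ∈ Ioo a b := ⟨hy.1.trans hz.1, hz.2⟩
    exact (hg hymem (Ioo_subset_Icc_self hz') hz.1).trans_eq (hroot z hz' hfz)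

theorem apply_pos_of_strictMonoOn {y : ℝ} (hf : ContinuousOn f (Icc a b))
    (hg : StrictMonoOn g (Icc a b)) (ha : sign (f a) = sign (g a))
    (hroot : ∀ z ∈ Ioo a b, f z = 0 → g z = 0) (hy : y ∈ Ioo a b) (hfy : 0 < f y) : 0 < g y := by
  have hymem := Ioo_subset_Icc_self hy
  rcases le_or_gt 0 (f a) with hfa | hfa
  · have hga : 0 ≤ g a := by
      rw [← sign_nonneg_iff, ← ha, sign_nonneg_iff]; exact hfa
    exact hga.trans_lt (hg (left_mem_Icc.2 (hy.1.trans hy.2).le) hymem hy.1)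
  · obtain ⟨z, hz, hfz⟩ := intermediate_value_Ioo hy.1.le
      (hf.mono (Icc_subset_Icc_right hy.2.le)) ⟨hfa, hfy⟩
    have hz' : z ∈ Ioo a b := ⟨hz.1, hz.2.trans hy.2⟩
    exact (hroot z hz' hfz).symm.trans_lt (hg (Ioo_subset_Icc_self hz') hymem hz.2)

theorem sign_eq_of_strictMonoOn {y : ℝ} (hf : ContinuousOn f (Icc a b))
    (hg : StrictMonoOn g (Icc a b)) (ha : sign (f a) = sign (g a)) (hb : sign (f b) = sign (g b))
    (hroot : ∀ z ∈ Ioo a b, f z = 0 → g z = 0) (hy : y ∈ Ioo a b) : sign (f y) = sign (g y) := by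
  rcases lt_trichotomy (f y) 0 with h | h | h
  · rw [sign_neg h, sign_neg (apply_neg_of_strictMonoOn hf hg hb hroot hy h)]
  · rw [h, hroot y hy h]
  · rw [sign_pos h, sign_pos (apply_pos_of_strictMonoOn hf hg ha hroot hy h)]

theorem exists_root_of_strictMonoOn {y : ℝ} (hf : StrictMonoOn f (Icc a b))
    (hg : ContinuousOn g (Icc a b)) (ha : sign (f a) = sign (g a)) (hb : sign (f b) = sign (g b))
    (hy : y ∈ Ioo a b) (hfy : f y = 0) : ∃ v ∈ Ioo a b, g v = 0 := by
  have hab := (hy.1.trans hy.2).le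
  have hfa : f a < 0 := hfy ▸ hf (left_mem_Icc.2 hab) (Ioo_subset_Icc_self hy) hy.1
  have hfb : 0 < f b := hfy ▸ hf (Ioo_subset_Icc_self hy) (right_mem_Icc.2 hab) hy.2
  have hga : g a < 0 := sign_eq_neg_one_iff.1 (ha ▸ sign_neg hfa)
  have hgb : 0 < g b := sign_eq_one_iff.1 (hb ▸ sign_pos hfb)
  exact intermediate_value_Ioo hab hg ⟨hga, hgb⟩

/-- `f` and `g` are strictly monotone on `s`, in the same direction. -/
def StrictlyComonotoneOn (f g : ℝ → ℝ) (s : Set ℝ) : Prop :=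
  (StrictMonoOn f s ∧ StrictMonoOn g s) ∨ (StrictAntiOn f s ∧ StrictAntiOn g s)

theorem StrictlyComonotoneOn.injOn {s : Set ℝ} (h : StrictlyComonotoneOn f g s) : InjOn f s :=
  h.elim (fun h => h.1.injOn) fun h => h.1.injOn

theorem StrictlyComonotoneOn.comp_orderIso (h : StrictlyComonotoneOn f g (Icc a b)) {χ : ℝ ≃o ℝ}
    (ha : χ a = a) (hb : χ b = b) : StrictlyComonotoneOn f (fun y => g (χ y)) (Icc a b) := by
  have hmaps : MapsTo χ (Icc a b) (Icc a b) := fun y hy =>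
    ⟨ha ▸ χ.monotone hy.1, (χ.monotone hy.2).trans_eq hb⟩
  exact h.imp (fun h => ⟨h.1, h.2.comp (χ.strictMono.strictMonoOn _) hmaps⟩)
    fun h => ⟨h.1, h.2.comp_strictMonoOn (χ.strictMono.strictMonoOn _) hmaps⟩

theorem StrictlyComonotoneOn.sign_eq (h : StrictlyComonotoneOn f g (Icc a b))
    (hf : ContinuousOn f (Icc a b)) (ha : sign (f a) = sign (g a)) (hb : sign (f b) = sign (g b))
    (hroot : ∀ z ∈ Ioo a b, f z = 0 → g z = 0) {y : ℝ} (hy : y ∈ Ioo a b) :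
    sign (f y) = sign (g y) := by
  rcases h with h | h
  · exact sign_eq_of_strictMonoOn hf h.2 ha hb hroot hy
  · have := sign_eq_of_strictMonoOn (f := fun y => -f y) (g := fun y => -g y) hf.neg h.2.neg
      (by simp [Left.sign_neg, ha]) (by simp [Left.sign_neg, hb]) (by simpa using hroot) hy
    simpa [Left.sign_neg] using this

theorem StrictlyComonotoneOn.exists_root (h : StrictlyComonotoneOn f g (Icc a b))
    (hg : ContinuousOn g (Icc a b)) (ha : sign (f a) = sign (g a)) (hb : sign (f b) = sign (g b))
    {y : ℝ} (hy : y ∈ Ioo a b) (hfy : f y = 0) : ∃ v ∈ Ioo a b, g v = 0 := by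
  rcases h with h | h
  · exact exists_root_of_strictMonoOn h.1 hg ha hb hy hfy
  · have := exists_root_of_strictMonoOn (f := fun y => -f y) (g := fun y => -g y) h.1.neg hg.neg
      (by simp [Left.sign_neg, ha]) (by simp [Left.sign_neg, hb]) hy (by simp [hfy])
    simpa using this

variable {Z : Finset ℝ} {z₀ z₁ : ℝ}

theorem exists_orderIso_map_roots (hg : Continuous g)
    (hZ : ∀ z ∈ Z, sign (f z) = sign (g z))
    (hgap : ∀ a b, a < b → (∀ z ∈ Z, z ∉ Ioo a b) → StrictlyComonotoneOn f g (Icc a b))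
    (h₀ : z₀ ∈ Z) (h₁ : z₁ ∈ Z) (S : Finset ℝ) (hS : ∀ y ∈ S, f y = 0 ∧ y ∉ Z ∧ y ∈ Icc z₀ z₁) :
    ∃ χ : ℝ ≃o ℝ, (∀ z ∈ Z, χ z = z) ∧ ∀ y ∈ S, g (χ y) = 0 := by
  induction S using Finset.induction_on with
  | empty => exact ⟨OrderIso.refl ℝ, fun _ _ => rfl, by simp⟩
  | insert η S hη ih =>
    obtain ⟨χ, hχZ, hχS⟩ := ih fun y hy => hS y (Finset.mem_insert_of_mem hy)
    obtain ⟨hfη, hηZ, hη₀, hη₁⟩ := hS η (Finset.mem_insert_self _ _)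
    obtain ⟨a, haZ, b, hbZ, hηab, hno⟩ := exists_gap_of_notMem Z h₀ h₁ hη₀ hη₁ hηZ
    have hco := hgap a b (hηab.1.trans hηab.2) hno
    obtain ⟨v, hv, hgv⟩ := hco.exists_root hg.continuousOn (hZ a haZ) (hZ b hbZ) hηab hfη
    have hχ_mem : ∀ y, χ y ∈ Ioo a b ↔ y ∈ Ioo a b := fun y => by
      rw [mem_Ioo, mem_Ioo, ← χ.lt_iff_lt (x := a) (y := y), ← χ.lt_iff_lt (x := y) (y := b),
        hχZ a haZ, hχZ b hbZ]
    obtain ⟨β, hβη, hβ⟩ := exists_orderIso_apply_eq ((hχ_mem η).2 hηab) hv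
    have hfix : ∀ y ∉ Ioo a b, χ.trans β y = χ y := fun y hy => hβ _ fun h => hy ((hχ_mem y).1 h)
    refine ⟨χ.trans β, fun z hz => (hfix z (hno z hz)).trans (hχZ z hz), fun y hy => ?_⟩
    rcases Finset.mem_insert.1 hy with rfl | hyS
    · simpa [hβη] using hgv
    · have hyab : y ∉ Ioo a b := fun h => hη <| by
        rwa [hco.injOn (Ioo_subset_Icc_self hηab) (Ioo_subset_Icc_self h)
          (hfη.trans (hS y hy).1.symm)]
      rw [hfix y hyab, hχS y hyS]

/-- `f` is nonzero on `s` and `g` has there the constant sign of `f`. -/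
def ConstSignOn (f g : ℝ → ℝ) (s : Set ℝ) : Prop :=
  ∃ σ : SignType, σ ≠ 0 ∧ ∀ y ∈ s, sign (f y) = σ ∧ sign (g y) = σ

theorem ConstSignOn.ne_zero {s : Set ℝ} (h : ConstSignOn f g s) {y : ℝ} (hy : y ∈ s) :
    f y ≠ 0 := by
  obtain ⟨σ, hσ, hs⟩ := h
  exact sign_ne_zero.1 ((hs y hy).1.trans_ne hσ)

theorem ConstSignOn.sign_eq {s : Set ℝ} (h : ConstSignOn f g s) {y z : ℝ} (hy : y ∈ s)
    (hz : z ∈ s) : sign (f y) = sign (g z) := by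
  obtain ⟨σ, -, hs⟩ := h
  rw [(hs y hy).1, (hs z hz).2]

theorem exists_orderIso_sign_eq_of_mem (hf : Continuous f) (hg : Continuous g)
    (hZ : ∀ z ∈ Z, sign (f z) = sign (g z))
    (hgap : ∀ a b, a < b → (∀ z ∈ Z, z ∉ Ioo a b) → StrictlyComonotoneOn f g (Icc a b))
    (h₀ : z₀ ∈ Z) (h₁ : z₁ ∈ Z) (hbot : ConstSignOn f g (Iic z₀)) (htop : ConstSignOn f g (Ici z₁))
    (hfin : {y | f y = 0}.Finite) :
    ∃ χ : ℝ ≃o ℝ, (∀ z ∈ Z, χ z = z) ∧ ∀ y, sign (f y) = sign (g (χ y)) := by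
  have hroot_mem : ∀ y, f y = 0 → y ∈ Icc z₀ z₁ := fun y hy =>
    ⟨not_lt.1 fun h => hbot.ne_zero (mem_Iic.2 h.le) hy,
      not_lt.1 fun h => htop.ne_zero (mem_Ici.2 h.le) hy⟩
  obtain ⟨χ, hχZ, hχ⟩ := exists_orderIso_map_roots hg hZ hgap h₀ h₁
    (hfin.toFinset.filter (· ∉ Z)) (by simpa using fun y hy hyZ => ⟨hy, hyZ, hroot_mem y hy⟩)
  have hroot : ∀ y, f y = 0 → y ∉ Z → g (χ y) = 0 := fun y hy hyZ => hχ y (by simp [hy, hyZ])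
  refine ⟨χ, hχZ, fun y => ?_⟩
  by_cases hyZ : y ∈ Z
  · rw [hχZ y hyZ, hZ y hyZ]
  rcases lt_or_ge y z₀ with hy₀ | hy₀
  · exact hbot.sign_eq (mem_Iic.2 hy₀.le) (hχZ z₀ h₀ ▸ χ.monotone hy₀.le : χ y ≤ z₀)
  rcases lt_or_ge z₁ y with hy₁ | hy₁
  · exact htop.sign_eq (mem_Ici.2 hy₁.le) (hχZ z₁ h₁ ▸ χ.monotone hy₁.le : z₁ ≤ χ y)
  obtain ⟨a, haZ, b, hbZ, hab, hno⟩ := exists_gap_of_notMem Z h₀ h₁ hy₀ hy₁ hyZ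
  exact ((hgap a b (hab.1.trans hab.2) hno).comp_orderIso (hχZ a haZ) (hχZ b hbZ)).sign_eq
    hf.continuousOn (by simp only [hχZ a haZ, hZ a haZ]) (by simp only [hχZ b hbZ, hZ b hbZ])
    (fun z hz hfz => hroot z hfz fun hzZ => hno z hzZ hz) hab

theorem exists_orderIso_sign_eq (hf : Continuous f) (hg : Continuous g)
    (hZ : ∀ z ∈ Z, sign (f z) = sign (g z))
    (hgap : ∀ a b, a < b → (∀ z ∈ Z, z ∉ Ioo a b) → StrictlyComonotoneOn f g (Icc a b))
    (hbot : ∃ z, ConstSignOn f g (Iic z)) (htop : ∃ z, ConstSignOn f g (Ici z))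
    (hfin : {y | f y = 0}.Finite) :
    ∃ χ : ℝ ≃o ℝ, (∀ z ∈ Z, χ z = z) ∧ ∀ y, sign (f y) = sign (g (χ y)) := by
  obtain ⟨z₀, h₀⟩ := hbot
  obtain ⟨z₁, h₁⟩ := htop
  have hsub : Z ⊆ insert z₀ (insert z₁ Z) :=
    (Finset.subset_insert _ _).trans (Finset.subset_insert _ _)
  obtain ⟨χ, hχZ, hχ⟩ := exists_orderIso_sign_eq_of_mem (Z := insert z₀ (insert z₁ Z)) hf hg
    (by
      intro z hz
      simp only [Finset.mem_insert] at hz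
      rcases hz with rfl | rfl | hz
      · exact h₀.sign_eq self_mem_Iic self_mem_Iic
      · exact h₁.sign_eq self_mem_Ici self_mem_Ici
      · exact hZ z hz)
    (fun a b hab hno => hgap a b hab fun z hz => hno z (hsub hz))
    (by simp) (by simp) h₀ h₁ hfin
  exact ⟨χ, fun z hz => hχZ z (hsub hz), hχ⟩

theorem sign_eq_of_isPreconnected {α : Type*} [TopologicalSpace α] {q : α → ℝ} {s : Set α}
    (hs : IsPreconnected s) (hq : ContinuousOn q s) (hne : ∀ x ∈ s, q x ≠ 0) {x y : α}
    (hx : x ∈ s) (hy : y ∈ s) : sign (q x) = sign (q y) :=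
  hs.constant (fun z hz => (continuousAt_sign_of_ne_zero (hne z hz)).comp_continuousWithinAt
    (hq z hz)) hx hy

theorem sign_comp_orderIso_of_fixes_roots (hf : Continuous f) {χ : ℝ ≃o ℝ}
    (hχ : ∀ z, f z = 0 → χ z = z) (y : ℝ) : sign (f (χ y)) = sign (f y) := by
  by_cases hy : f y = 0
  · rw [hχ y hy]
  refine sign_eq_of_isPreconnected isPreconnected_uIcc hf.continuousOn (fun w hw hfw => hy ?_)
    right_mem_uIcc left_mem_uIcc
  have hχw := hχ w hfw
  suffices w = y from this ▸ hfw
  rcases mem_uIcc.1 hw with ⟨hyw, hwy⟩ | ⟨hyw, hwy⟩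
  · exact le_antisymm (χ.le_iff_le.1 (hχw.trans_le hwy)) hyw
  · exact le_antisymm hwy (χ.le_iff_le.1 (hyw.trans_eq hχw.symm))

end SignPatterns

section RealPolynomials

open Polynomial

theorem eventually_sign_eval_atTop (p : ℝ[X]) :
    ∀ᶠ y in atTop, sign (p.eval y) = sign p.leadingCoeff := by
  rcases Nat.eq_zero_or_pos p.natDegree with hd | hd
  · rw [eq_C_of_natDegree_eq_zero hd]
    simp
  have hd' : 0 < p.degree := natDegree_pos_iff_degree_pos.1 hd
  rcases lt_trichotomy p.leadingCoeff 0 with h | h | h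
  · filter_upwards [(p.tendsto_atBot_of_leadingCoeff_nonpos hd' h.le).eventually_lt_atBot 0]
      with y hy
    rw [sign_neg hy, sign_neg h]
  · rw [leadingCoeff_eq_zero.1 h]
    simp
  · filter_upwards [(p.tendsto_atTop_of_leadingCoeff_nonneg hd' h.le).eventually_gt_atTop 0]
      with y hy
    rw [sign_pos hy, sign_pos h]

theorem eventually_sign_eval_atBot (p : ℝ[X]) :
    ∀ᶠ y in atBot, sign (p.eval y) = sign (p.leadingCoeff * (-1) ^ p.natDegree) := by
  filter_upwards [tendsto_neg_atBot_atTop.eventually (eventually_sign_eval_atTop (p.comp (-X)))]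
    with y hy
  simpa [leadingCoeff_comp] using hy

variable {p p' : ℝ[X]} {ψ : ℝ ≃o ℝ}

theorem exists_constSignOn_Ici (hp : p ≠ 0) (hlc : sign p.leadingCoeff = sign p'.leadingCoeff) :
    ∃ z, ConstSignOn p.eval (fun y => p'.eval (ψ y)) (Ici z) := by
  obtain ⟨z, hz⟩ := eventually_atTop.1 ((eventually_sign_eval_atTop p).and
    (ψ.tendsto_atTop.eventually (eventually_sign_eval_atTop p')))
  exact ⟨z, sign p.leadingCoeff, sign_ne_zero.2 (leadingCoeff_ne_zero.2 hp),
    fun y hy => hlc ▸ hz y hy⟩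

theorem exists_constSignOn_Iic (hp : p ≠ 0) (hlc : sign p.leadingCoeff = sign p'.leadingCoeff)
    (hdeg : p.natDegree = p'.natDegree) :
    ∃ z, ConstSignOn p.eval (fun y => p'.eval (ψ y)) (Iic z) := by
  obtain ⟨z, hz⟩ := eventually_atBot.1 ((eventually_sign_eval_atBot p).and
    (ψ.tendsto_atBot.eventually (eventually_sign_eval_atBot p')))
  refine ⟨z, sign (p.leadingCoeff * (-1) ^ p.natDegree), sign_ne_zero.2
    (mul_ne_zero (leadingCoeff_ne_zero.2 hp) (pow_ne_zero _ (by norm_num))), fun y hy => ?_⟩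
  obtain ⟨h, h'⟩ := hz y hy
  exact ⟨h, by rw [h', sign_mul, sign_mul, hlc, hdeg]⟩

theorem strictMonoOn_eval {a b : ℝ} (h : ∀ y ∈ Ioo a b, 0 < (derivative p).eval y) :
    StrictMonoOn p.eval (Icc a b) :=
  strictMonoOn_of_deriv_pos (convex_Icc a b) p.continuousOn fun y hy => by
    rw [interior_Icc] at hy
    rw [Polynomial.deriv]
    exact h y hy

theorem strictAntiOn_eval {a b : ℝ} (h : ∀ y ∈ Ioo a b, (derivative p).eval y < 0) :
    StrictAntiOn p.eval (Icc a b) :=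
  strictAntiOn_of_deriv_neg (convex_Icc a b) p.continuousOn fun y hy => by
    rw [interior_Icc] at hy
    rw [Polynomial.deriv]
    exact h y hy

theorem strictlyComonotoneOn_eval {a b : ℝ} (hab : a < b)
    (hsign : ∀ y, sign ((derivative p).eval y) = sign ((derivative p').eval (ψ y)))
    (hne : ∀ y ∈ Ioo a b, (derivative p).eval y ≠ 0) :
    StrictlyComonotoneOn p.eval (fun y => p'.eval (ψ y)) (Icc a b) := by
  obtain ⟨m, hm⟩ := nonempty_Ioo.2 hab
  have hconst : ∀ y ∈ Ioo a b, sign ((derivative p).eval y) = sign ((derivative p).eval m) :=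
    fun y hy => sign_eq_of_isPreconnected isPreconnected_Ioo
      (derivative p).continuousOn hne hy hm
  have hconst' : ∀ w ∈ Ioo (ψ a) (ψ b),
      sign ((derivative p').eval w) = sign ((derivative p).eval m) := fun w hw => by
    rw [← hconst (ψ.symm w) ⟨(ψ.lt_symm_apply).2 hw.1, (ψ.symm_apply_lt).2 hw.2⟩, hsign,
      ψ.apply_symm_apply]
  have hmaps : MapsTo ψ (Icc a b) (Icc (ψ a) (ψ b)) :=
    fun y hy => ⟨ψ.monotone hy.1, ψ.monotone hy.2⟩
  have hψ := ψ.strictMono.strictMonoOn (Icc a b)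
  rcases (hne m hm).lt_or_gt with h | h
  · simp only [sign_neg h, sign_eq_neg_one_iff] at hconst hconst'
    exact Or.inr ⟨strictAntiOn_eval hconst, (strictAntiOn_eval hconst').comp_strictMonoOn hψ hmaps⟩
  · simp only [sign_pos h, sign_eq_one_iff] at hconst hconst'
    exact Or.inl ⟨strictMonoOn_eval hconst, (strictMonoOn_eval hconst').comp hψ hmaps⟩

theorem exists_orderIso_sign_eval_eq (hp : p ≠ 0) (hdeg : p.natDegree = p'.natDegree)
    (hlc : sign p.leadingCoeff = sign p'.leadingCoeff)
    (hsign : ∀ y, sign ((derivative p).eval y) = sign ((derivative p').eval (ψ y)))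
    {Z : Finset ℝ} (hZ : ∀ z ∈ Z, sign (p.eval z) = sign (p'.eval (ψ z)))
    (hder : ∀ y, (derivative p).eval y = 0 → y ∈ Z) :
    ∃ χ : ℝ ≃o ℝ, (∀ z ∈ Z, χ z = z) ∧ ∀ y, sign (p.eval y) = sign (p'.eval (ψ (χ y))) :=
  exists_orderIso_sign_eq p.continuous (p'.continuous.comp ψ.continuous) hZ
    (fun _ _ hab hno => strictlyComonotoneOn_eval hab hsign fun y hy h => hno y (hder y h) hy)
    (exists_constSignOn_Iic hp hlc hdeg) (exists_constSignOn_Ici hp hlc)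
    (p.finite_setOfPred_isRoot hp)

end RealPolynomials

section QuantifierElimination

open Polynomial

variable {R : Type*} [CommRing R]

theorem exists_pseudo_divMod {q : R[X]} (hq : 0 < q.natDegree) (p : R[X]) :
    ∃ (k : ℕ) (u r : R[X]),
      C (q.leadingCoeff ^ (2 * k)) * p = u * q + r ∧ r.natDegree < q.natDegree := by
  induction hn : p.natDegree using Nat.strong_induction_on generalizing p with
  | _ n ih =>
    subst hn
    rcases lt_or_ge p.natDegree q.natDegree with hlt | hle
    · exact ⟨0, 0, p, by simp, hlt⟩
    have hcancel : C q.leadingCoeff * q.cancelLeads p = C (q.leadingCoeff ^ 2) * p -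
        C (q.leadingCoeff * p.leadingCoeff) * X ^ (p.natDegree - q.natDegree) * q := by
      rw [cancelLeads, Nat.sub_eq_zero_of_le hle, pow_two, C_mul, C_mul]
      ring
    obtain ⟨k, u, r, hdiv, hr⟩ := ih _ ((natDegree_C_mul_le _ _).trans_lt
      (natDegree_cancelLeads_lt_of_natDegree_le_natDegree hle (hq.trans_le hle)))
      (C q.leadingCoeff * q.cancelLeads p) rfl
    refine ⟨k + 1, u + C (q.leadingCoeff ^ (2 * k)) * C (q.leadingCoeff * p.leadingCoeff) *
      X ^ (p.natDegree - q.natDegree), r, ?_, hr⟩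
    rw [hcancel] at hdiv
    rw [mul_add, pow_add, C_mul]
    linear_combination hdiv

theorem exists_sign_remainder (p q : R[X]) :
    ∃ r : R[X], r.natDegree ≤ q.natDegree - 1 ∧ ∀ (φ : R →+* ℝ) (y : ℝ),
      φ q.leadingCoeff ≠ 0 → eval₂ φ y q = 0 → sign (eval₂ φ y r) = sign (eval₂ φ y p) := by
  rcases Nat.eq_zero_or_pos q.natDegree with hq | hq
  · refine ⟨0, by simp, fun φ y hlc hroot => ?_⟩
    rw [eq_C_of_natDegree_eq_zero hq, eval₂_C] at hroot
    exact absurd hroot (by rwa [leadingCoeff, hq] at hlc)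
  obtain ⟨k, u, r, hdiv, hr⟩ := exists_pseudo_divMod hq p
  refine ⟨r, Nat.le_sub_one_of_lt hr, fun φ y hlc hroot => ?_⟩
  have heval := congrArg (eval₂ φ y) hdiv
  rw [eval₂_mul, eval₂_C, eval₂_add, eval₂_mul, hroot, mul_zero, zero_add, map_pow,
    pow_mul] at heval
  have hpos : 0 < (φ q.leadingCoeff ^ 2) ^ k := by positivity
  rw [← heval, sign_mul, sign_pos hpos, one_mul]

/-- The specialisations of a family of polynomials along `φ` and along `φ'` have the same sign
vectors up to an increasing reparametrisation of the line. -/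
def SameSignPattern (φ φ' : R →+* ℝ) (F : Multiset R[X]) : Prop :=
  ∃ ψ : ℝ ≃o ℝ, ∀ p ∈ F, ∀ y, sign (eval₂ φ y p) = sign (eval₂ φ' (ψ y) p)

/-- The sign pattern of the specialisations of `F` depends only on the signs of finitely many
coefficients; this is quantifier elimination for one variable. -/
def SignsDetermined (F : Multiset R[X]) : Prop :=
  ∃ T : Set R, T.Finite ∧ ∀ φ φ' : R →+* ℝ, (∀ r ∈ T, sign (φ r) = sign (φ' r)) →
    SameSignPattern φ φ' F

variable {φ φ' : R →+* ℝ} {p : R[X]} {F : Multiset R[X]}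

theorem SameSignPattern.cons_of_eraseLead (hφ : φ p.leadingCoeff = 0)
    (hφ' : φ' p.leadingCoeff = 0) (h : SameSignPattern φ φ' (p.eraseLead ::ₘ F)) :
    SameSignPattern φ φ' (p ::ₘ F) := by
  have heval : ∀ (χ : R →+* ℝ) (y : ℝ), χ p.leadingCoeff = 0 →
      eval₂ χ y p.eraseLead = eval₂ χ y p := fun χ y hχ => by
    conv_rhs => rw [← p.eraseLead_add_C_mul_X_pow]
    rw [eval₂_add, eval₂_mul, eval₂_C, hχ, zero_mul, add_zero]
  obtain ⟨ψ, hψ⟩ := h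
  refine ⟨ψ, Multiset.forall_mem_cons.2
    ⟨fun y => ?_, fun q hq => hψ q (Multiset.mem_cons_of_mem hq)⟩⟩
  rw [← heval φ y hφ, ← heval φ' _ hφ']
  exact hψ _ (Multiset.mem_cons_self _ _) y

theorem SameSignPattern.cons_of_roots {ψ : ℝ ≃o ℝ} (hlc : φ p.leadingCoeff ≠ 0)
    (hlc' : sign (φ p.leadingCoeff) = sign (φ' p.leadingCoeff))
    (hF : ∀ q ∈ F, φ q.leadingCoeff ≠ 0) (hder : derivative p ∈ F)
    (hψ : ∀ q ∈ F, ∀ y, sign (eval₂ φ y q) = sign (eval₂ φ' (ψ y) q))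
    (hroots : ∀ q ∈ F, ∀ y, eval₂ φ y q = 0 →
      sign (eval₂ φ y p) = sign (eval₂ φ' (ψ y) p)) :
    SameSignPattern φ φ' (p ::ₘ F) := by
  classical
  have map_ne_zero : ∀ q : R[X], φ q.leadingCoeff ≠ 0 → q.map φ ≠ 0 := fun q hq h =>
    hq (by rw [leadingCoeff, ← coeff_map, h, coeff_zero])
  have hlc₀ : φ' p.leadingCoeff ≠ 0 := sign_ne_zero.1 (hlc' ▸ sign_ne_zero.2 hlc)
  simp only [SameSignPattern, ← eval_map] at hψ hroots ⊢
  let Z : Finset ℝ := F.toFinset.biUnion fun q => (q.map φ).roots.toFinset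
  have mem_Z : ∀ y, y ∈ Z ↔ ∃ q ∈ F, (q.map φ).eval y = 0 := fun y => by
    simp only [Z, Finset.mem_biUnion, Multiset.mem_toFinset, mem_roots', IsRoot.def]
    exact exists_congr fun q => and_congr_right fun hq =>
      and_iff_right (map_ne_zero q (hF q hq))
  obtain ⟨χ, hfix, hχ⟩ := exists_orderIso_sign_eval_eq (p := p.map φ) (p' := p.map φ') (ψ := ψ)
    (Z := Z) (map_ne_zero p hlc)
    (by rw [natDegree_map_of_leadingCoeff_ne_zero _ hlc,
      natDegree_map_of_leadingCoeff_ne_zero _ hlc₀])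
    (by rwa [leadingCoeff_map_of_leadingCoeff_ne_zero _ hlc,
      leadingCoeff_map_of_leadingCoeff_ne_zero _ hlc₀])
    (fun y => by rw [derivative_map, derivative_map]; exact hψ _ hder y)
    (fun z hz => by
      obtain ⟨q, hq, hz⟩ := (mem_Z z).1 hz
      exact hroots q hq z hz)
    (fun y hy => (mem_Z y).2 ⟨_, hder, by rwa [← derivative_map]⟩)
  refine ⟨χ.trans ψ, Multiset.forall_mem_cons.2 ⟨hχ, fun q hq y => ?_⟩⟩
  rw [OrderIso.trans_apply, ← hψ q hq]
  exact (sign_comp_orderIso_of_fixes_roots (q.map φ).continuous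
    (fun z hz => hfix z ((mem_Z z).2 ⟨q, hq, hz⟩)) y).symm

theorem map_leadingCoeff_derivative_ne_zero (hp : 0 < p.natDegree) (h : φ p.leadingCoeff ≠ 0) :
    φ (derivative p).leadingCoeff ≠ 0 := by
  have hcoeff : φ ((derivative p).coeff (p.natDegree - 1)) = φ p.leadingCoeff * p.natDegree := by
    rw [coeff_derivative, Nat.sub_add_cancel hp, ← Nat.cast_succ, Nat.succ_eq_add_one,
      Nat.sub_add_cancel hp, map_mul, map_natCast]
    rfl
  have hne : φ ((derivative p).coeff (p.natDegree - 1)) ≠ 0 := by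
    rw [hcoeff]
    exact mul_ne_zero h (Nat.cast_ne_zero.2 hp.ne')
  have hdeg : (derivative p).natDegree = p.natDegree - 1 :=
    (natDegree_derivative_le p).antisymm
      (le_natDegree_of_ne_zero fun h0 => hne (by rw [h0, map_zero]))
  rwa [leadingCoeff, hdeg]

theorem SameSignPattern.cons_of_remainders {rem : R[X] → R[X]}
    (hrem : ∀ (q : R[X]) (χ : R →+* ℝ) (y : ℝ), χ q.leadingCoeff ≠ 0 → eval₂ χ y q = 0 →
      sign (eval₂ χ y (rem q)) = sign (eval₂ χ y p))
    (hp : 0 < p.natDegree) (hlc : ∀ q ∈ p ::ₘ F, φ q.leadingCoeff ≠ 0)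
    (hsign : ∀ q ∈ p ::ₘ F, sign (φ q.leadingCoeff) = sign (φ' q.leadingCoeff))
    (h : SameSignPattern φ φ'
      ((derivative p ::ₘ (derivative p ::ₘ F).map rem) + F)) :
    SameSignPattern φ φ' (p ::ₘ F) := by
  obtain ⟨ψ, hψ⟩ := h
  have hlc' : ∀ q ∈ p ::ₘ F, φ' q.leadingCoeff ≠ 0 := fun q hq =>
    sign_ne_zero.1 (hsign q hq ▸ sign_ne_zero.2 (hlc q hq))
  have lc_ne_zero : ∀ χ : R →+* ℝ, (∀ q ∈ p ::ₘ F, χ q.leadingCoeff ≠ 0) →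
      ∀ q ∈ derivative p ::ₘ F, χ q.leadingCoeff ≠ 0 := fun χ hχ =>
    Multiset.forall_mem_cons.2 ⟨map_leadingCoeff_derivative_ne_zero hp (hχ p (by simp)),
      (Multiset.forall_mem_cons.1 hχ).2⟩
  have hψF : ∀ q ∈ derivative p ::ₘ F, ∀ y, sign (eval₂ φ y q) = sign (eval₂ φ' (ψ y) q) :=
    fun q hq => hψ q (by simp only [Multiset.mem_add, Multiset.mem_cons] at hq ⊢; tauto)
  have hψrem : ∀ q ∈ derivative p ::ₘ F, ∀ y,
      sign (eval₂ φ y (rem q)) = sign (eval₂ φ' (ψ y) (rem q)) := fun q hq =>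
    hψ (rem q) (Multiset.mem_add.2 (.inl (Multiset.mem_cons_of_mem (Multiset.mem_map_of_mem _ hq))))
  obtain ⟨ψ', hψ'⟩ := cons_of_roots (hlc p (by simp)) (hsign p (by simp)) (lc_ne_zero φ hlc)
    (by simp) hψF fun q hq y hy => by
      have hy' : eval₂ φ' (ψ y) q = 0 := by
        rw [← sign_eq_zero_iff, ← hψF q hq, hy, sign_zero]
      rw [← hrem q φ y (lc_ne_zero φ hlc q hq) hy, hψrem q hq,
        hrem q φ' _ (lc_ne_zero φ' hlc' q hq) hy']
  exact ⟨ψ', fun q hq => hψ' q (by simp only [Multiset.mem_cons] at hq ⊢; tauto)⟩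

theorem SignsDetermined.cons_of_natDegree_eq_zero (hp : p.natDegree = 0)
    (hF : SignsDetermined F) : SignsDetermined (p ::ₘ F) := by
  obtain ⟨T, hT, hsame⟩ := hF
  refine ⟨insert (p.coeff 0) T, hT.insert _, fun φ φ' h => ?_⟩
  obtain ⟨ψ, hψ⟩ := hsame φ φ' fun r hr => h r (mem_insert_of_mem _ hr)
  refine ⟨ψ, Multiset.forall_mem_cons.2 ⟨fun y => ?_, hψ⟩⟩
  rw [eq_C_of_natDegree_eq_zero hp, eval₂_C, eval₂_C]
  exact h _ (mem_insert _ _)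

/- Either some leading coefficient vanishes, and may be erased, or none does, and remainders by
the other members locate `p` at their roots. -/
theorem SignsDetermined.cons {rem : R[X] → R[X]}
    (hrem : ∀ (q : R[X]) (χ : R →+* ℝ) (y : ℝ), χ q.leadingCoeff ≠ 0 → eval₂ χ y q = 0 →
      sign (eval₂ χ y (rem q)) = sign (eval₂ χ y p))
    (hp : 0 < p.natDegree)
    (herase : ∀ q X, p ::ₘ F = q ::ₘ X → SignsDetermined (q.eraseLead ::ₘ X))
    (h : SignsDetermined ((derivative p ::ₘ (derivative p ::ₘ F).map rem) + F)) :
    SignsDetermined (p ::ₘ F) := by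
  classical
  have herase' : ∀ q, ∃ T : Set R, T.Finite ∧ (q ∈ p ::ₘ F → ∀ φ φ' : R →+* ℝ,
      (∀ r ∈ T, sign (φ r) = sign (φ' r)) →
        SameSignPattern φ φ' (q.eraseLead ::ₘ (p ::ₘ F).erase q)) := fun q => by
    by_cases hq : q ∈ p ::ₘ F
    · obtain ⟨T, hT, hT'⟩ := herase q _ (Multiset.cons_erase hq).symm
      exact ⟨T, hT, fun _ => hT'⟩
    · exact ⟨∅, finite_empty, fun h => absurd h hq⟩
  choose E hE hE' using herase'
  obtain ⟨T, hT, hT'⟩ := h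
  have hfin : {q | q ∈ p ::ₘ F}.Finite :=
    (p ::ₘ F).toFinset.finite_toSet.subset fun q hq => by simpa using hq
  refine ⟨T ∪ (⋃ q ∈ {q | q ∈ p ::ₘ F}, E q) ∪ leadingCoeff '' {q | q ∈ p ::ₘ F},
    (hT.union (hfin.biUnion fun q _ => hE q)).union (hfin.image _), fun φ φ' hsign => ?_⟩
  have hlc : ∀ q ∈ p ::ₘ F, sign (φ q.leadingCoeff) = sign (φ' q.leadingCoeff) := fun q hq =>
    hsign _ (.inr (mem_image_of_mem _ hq))
  by_cases hvanish : ∃ q ∈ p ::ₘ F, φ q.leadingCoeff = 0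
  · obtain ⟨q, hq, hq₀⟩ := hvanish
    rw [← Multiset.cons_erase hq]
    refine .cons_of_eraseLead hq₀ ?_
      (hE' q hq φ φ' fun r hr => hsign r (.inl (.inr (mem_biUnion hq hr))))
    rw [← sign_eq_zero_iff, ← hlc q hq, hq₀, sign_zero]
  · exact .cons_of_remainders hrem hp (fun q hq h => hvanish ⟨q, hq, h⟩) hlc
      (hT' φ φ' fun r hr => hsign r (.inl (.inl hr)))

theorem multiset_induction_of_lt {α : Type*} (d : α → ℕ) {motive : Multiset α → Prop}
    (step : ∀ F, (∀ a X Y, F = a ::ₘ X → (∀ b ∈ Y, d b < d a) → motive (Y + X)) → motive F)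
    (F : Multiset α) : motive F := by
  induction F using (InvImage.wf (Multiset.map d)
    (Multiset.wellFounded_isDershowitzMannaLT (α := ℕ))).induction with
  | _ F ih =>
    refine step F fun a X Y hF hY => ih _ ⟨X.map d, Y.map d, {d a}, by simp, ?_, ?_, ?_⟩
    · rw [Multiset.map_add, add_comm]
    · rw [hF, Multiset.map_cons, ← Multiset.singleton_add, add_comm]
    · simpa using hY

theorem signsDetermined (F : Multiset R[X]) : SignsDetermined F := by
  induction F using multiset_induction_of_lt natDegree with
  | step F ih =>
    by_cases hconst : ∃ p ∈ F, p.natDegree = 0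
    · obtain ⟨p, hp, hp₀⟩ := hconst
      obtain ⟨X, rfl⟩ := Multiset.exists_cons_of_mem hp
      exact .cons_of_natDegree_eq_zero hp₀ (by simpa using ih p X 0 rfl (by simp))
    push Not at hconst
    rcases F.empty_or_exists_mem with rfl | hF
    · exact ⟨∅, finite_empty, fun _ _ _ => ⟨OrderIso.refl ℝ, by simp⟩⟩
    obtain ⟨p, hp, hmax⟩ := exists_max_image {q | q ∈ F} natDegree
      (by classical exact F.toFinset.finite_toSet.subset fun q hq => by simpa using hq) hF
    obtain ⟨X, rfl⟩ := Multiset.exists_cons_of_mem hp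
    have hpos : 0 < p.natDegree := Nat.pos_of_ne_zero (hconst p hp)
    choose rem hdeg hrem using exists_sign_remainder p
    refine .cons hrem hpos (fun q Y hY => ?_) (ih p X _ rfl ?_)
    · have hq := Nat.pos_of_ne_zero (hconst q (hY ▸ Multiset.mem_cons_self q Y))
      exact ih q Y {q.eraseLead} hY (by have := q.eraseLead_natDegree_le; simp; omega)
    · have hder := natDegree_derivative_lt hpos.ne'
      refine Multiset.forall_mem_cons.2 ⟨hder, Multiset.forall_mem_map_iff.2 fun q hq => ?_⟩
      have hq : q.natDegree ≤ p.natDegree := by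
        rcases Multiset.mem_cons.1 hq with rfl | hq
        exacts [hder.le, hmax q (Multiset.mem_cons_of_mem hq)]
      have := hdeg q
      omega

end QuantifierElimination

section Semialgebraic

variable {σ τ κ : Type*}

/-- A function on the real affine space with coordinates indexed by `σ` that is given by a
polynomial. -/
def IsPolynomialFun (a : (σ → ℝ) → ℝ) : Prop :=
  ∃ p : MvPolynomial σ ℝ, ∀ z, a z = MvPolynomial.eval z p

namespace IsPolynomialFun

variable {a b : (σ → ℝ) → ℝ}

theorem coord (i : σ) : IsPolynomialFun fun z : σ → ℝ => z i :=
  ⟨MvPolynomial.X i, by simp⟩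

theorem const (c : ℝ) : IsPolynomialFun fun _ : σ → ℝ => c :=
  ⟨MvPolynomial.C c, by simp⟩

theorem add (ha : IsPolynomialFun a) (hb : IsPolynomialFun b) :
    IsPolynomialFun fun z => a z + b z := by
  obtain ⟨p, hp⟩ := ha
  obtain ⟨q, hq⟩ := hb
  exact ⟨p + q, by simp [hp, hq]⟩

theorem mul (ha : IsPolynomialFun a) (hb : IsPolynomialFun b) :
    IsPolynomialFun fun z => a z * b z := by
  obtain ⟨p, hp⟩ := ha
  obtain ⟨q, hq⟩ := hb
  exact ⟨p * q, by simp [hp, hq]⟩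

theorem sub (ha : IsPolynomialFun a) (hb : IsPolynomialFun b) :
    IsPolynomialFun fun z => a z - b z := by
  obtain ⟨p, hp⟩ := ha
  obtain ⟨q, hq⟩ := hb
  exact ⟨p - q, by simp [hp, hq]⟩

theorem pow (ha : IsPolynomialFun a) (k : ℕ) : IsPolynomialFun fun z => a z ^ k := by
  obtain ⟨p, hp⟩ := ha
  exact ⟨p ^ k, by simp [hp]⟩

theorem sum {ι : Type*} {s : Finset ι} {a : ι → (σ → ℝ) → ℝ}
    (ha : ∀ i, IsPolynomialFun (a i)) : IsPolynomialFun fun z => ∑ i ∈ s, a i z := by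
  choose p hp using ha
  exact ⟨∑ i ∈ s, p i, by simp [hp]⟩

theorem comp (ha : IsPolynomialFun a) {F : (τ → ℝ) → σ → ℝ}
    (hF : ∀ i, IsPolynomialFun fun z => F z i) : IsPolynomialFun fun z => a (F z) := by
  obtain ⟨p, hp⟩ := ha
  choose q hq using hF
  refine ⟨MvPolynomial.bind₁ q p, fun z => ?_⟩
  calc a (F z) = MvPolynomial.eval (F z) p := hp _
    _ = MvPolynomial.eval (fun i => MvPolynomial.eval z (q i)) p := by
      rw [show F z = fun i => MvPolynomial.eval z (q i) from funext fun i => hq i z]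
    _ = MvPolynomial.eval z (MvPolynomial.bind₁ q p) := by
      simp only [MvPolynomial.eval, MvPolynomial.eval₂Hom_bind₁]

theorem continuous (ha : IsPolynomialFun a) : Continuous a := by
  obtain ⟨p, hp⟩ := ha
  rw [funext hp]
  exact MvPolynomial.continuous_eval p

end IsPolynomialFun

/-- A semialgebraic predicate, encoded as one whose truth depends only on the signs of finitely
many polynomials. -/
def IsSemialgebraic (P : (σ → ℝ) → Prop) : Prop :=
  ∃ T : Set (MvPolynomial σ ℝ), T.Finite ∧ ∀ x x' : σ → ℝ,
    (∀ r ∈ T, sign (MvPolynomial.eval x r) = sign (MvPolynomial.eval x' r)) → P x → P x'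

namespace IsSemialgebraic

variable {P P' : (σ → ℝ) → Prop} {a b : (σ → ℝ) → ℝ}

theorem congr (hP : IsSemialgebraic P) (h : ∀ x, P x ↔ P' x) : IsSemialgebraic P' :=
  (funext fun x => propext (h x) : P = P') ▸ hP

theorem not (hP : IsSemialgebraic P) : IsSemialgebraic fun x => ¬ P x := by
  obtain ⟨T, hT, h⟩ := hP
  exact ⟨T, hT, fun x x' hx hPx hPx' => hPx (h x' x (fun r hr => (hx r hr).symm) hPx')⟩

theorem and (hP : IsSemialgebraic P) (hP' : IsSemialgebraic P') :
    IsSemialgebraic fun x => P x ∧ P' x := by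
  obtain ⟨T, hT, h⟩ := hP
  obtain ⟨T', hT', h'⟩ := hP'
  exact ⟨T ∪ T', hT.union hT', fun x x' hx => And.imp (h x x' fun r hr => hx r (.inl hr))
    (h' x x' fun r hr => hx r (.inr hr))⟩

theorem or (hP : IsSemialgebraic P) (hP' : IsSemialgebraic P') :
    IsSemialgebraic fun x => P x ∨ P' x :=
  (hP.not.and hP'.not).not.congr fun _ => or_iff_not_and_not.symm

theorem imp (hP : IsSemialgebraic P) (hP' : IsSemialgebraic P') :
    IsSemialgebraic fun x => P x → P' x :=
  (hP.not.or hP').congr fun _ => imp_iff_not_or.symm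

theorem lt (ha : IsPolynomialFun a) (hb : IsPolynomialFun b) :
    IsSemialgebraic fun x => a x < b x := by
  obtain ⟨p, hp⟩ := hb.sub ha
  refine ⟨{p}, finite_singleton p, fun x x' h hx => ?_⟩
  have hsign := h p rfl
  rw [← hp, ← hp, sign_pos (sub_pos.2 hx)] at hsign
  exact sub_pos.1 (sign_eq_one_iff.1 hsign.symm)

theorem le (ha : IsPolynomialFun a) (hb : IsPolynomialFun b) :
    IsSemialgebraic fun x => a x ≤ b x :=
  (lt hb ha).not.congr fun _ => not_lt

theorem eq (ha : IsPolynomialFun a) (hb : IsPolynomialFun b) :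
    IsSemialgebraic fun x => a x = b x :=
  ((le ha hb).and (le hb ha)).congr fun _ => le_antisymm_iff.symm

theorem comp (hP : IsSemialgebraic P) {F : (τ → ℝ) → σ → ℝ}
    (hF : ∀ i, IsPolynomialFun fun z => F z i) : IsSemialgebraic fun z => P (F z) := by
  obtain ⟨T, hT, h⟩ := hP
  have hcomp (p : MvPolynomial σ ℝ) : IsPolynomialFun fun z => MvPolynomial.eval (F z) p :=
    IsPolynomialFun.comp (a := fun x => MvPolynomial.eval x p) ⟨p, fun _ => rfl⟩ hF
  choose q hq using hcomp
  refine ⟨q '' T, hT.image q, fun x x' hx => h _ _ fun r hr => ?_⟩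
  have hsign := hx _ (mem_image_of_mem q hr)
  rwa [← hq r x, ← hq r x'] at hsign

theorem exists_real {Q : ℝ → (σ → ℝ) → Prop}
    (h : IsSemialgebraic fun z : Option σ → ℝ => Q (z none) fun i => z (some i)) :
    IsSemialgebraic fun x => ∃ y, Q y x := by
  obtain ⟨T, hT, h⟩ := h
  obtain ⟨S, hS, hsame⟩ :=
    signsDetermined (hT.toFinset.val.map (MvPolynomial.optionEquivLeft ℝ σ))
  refine ⟨S, hS, fun x x' hx ⟨y, hy⟩ => ?_⟩
  obtain ⟨ψ, hψ⟩ := hsame (MvPolynomial.eval x) (MvPolynomial.eval x') hx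
  refine ⟨ψ y, h (fun o => o.elim y x) (fun o => o.elim (ψ y) x') (fun r hr => ?_) hy⟩
  simp only [MvPolynomial.optionEquivLeft_elim_eval, Polynomial.eval_map]
  exact hψ _ (Multiset.mem_map_of_mem _ (by simpa using hr)) y

theorem forall_real {Q : ℝ → (σ → ℝ) → Prop}
    (h : IsSemialgebraic fun z : Option σ → ℝ => Q (z none) fun i => z (some i)) :
    IsSemialgebraic fun x => ∀ y, Q y x :=
  (exists_real (Q := fun y x => ¬ Q y x) h.not).not.congr fun _ => not_exists_not

theorem exists_pi {κ : Type*} [Finite κ] : ∀ {Q : (σ → ℝ) → (κ → ℝ) → Prop},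
    (IsSemialgebraic fun z : σ ⊕ κ → ℝ => Q (fun i => z (.inl i)) fun k => z (.inr k)) →
    IsSemialgebraic fun x => ∃ y, Q x y := by
  induction κ using Finite.induction_empty_option generalizing σ with
  | of_equiv e ih =>
    intro Q h
    have hcomp : IsSemialgebraic fun z : σ ⊕ _ → ℝ =>
        Q (fun i => z (Sum.inl i)) fun k => z (Sum.inr (e.symm k)) :=
      h.comp (F := fun z i => z (Sum.map id e.symm i)) fun _ => .coord _
    refine (ih (Q := fun x y => Q x fun k => y (e.symm k)) hcomp).congr fun x =>
      ⟨fun ⟨y, hy⟩ => ⟨_, hy⟩, fun ⟨y, hy⟩ => ⟨fun k => y (e k), ?_⟩⟩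
    simpa only [e.apply_symm_apply] using hy
  | h_empty =>
    intro Q h
    have hcomp : IsSemialgebraic fun x : σ → ℝ => Q x PEmpty.elim :=
      (h.comp (F := fun x i => Sum.elim x PEmpty.elim i) (by
        rintro (i | k)
        exacts [.coord i, k.elim])).congr fun x => by
          rw [Subsingleton.elim PEmpty.elim fun k => Sum.elim x PEmpty.elim (Sum.inr k)]; rfl
    exact hcomp.congr fun x => ⟨fun h => ⟨_, h⟩, fun ⟨y, hy⟩ => by
      rwa [Subsingleton.elim y PEmpty.elim] at hy⟩
  | h_option ih =>
    intro Q h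
    have hcomp : IsSemialgebraic fun z : Option σ ⊕ _ → ℝ => Q (fun i => z (Sum.inl (some i)))
        fun k => k.elim (z (Sum.inl none)) fun j => z (Sum.inr j) :=
      h.comp (F := fun z i => Sum.elim (fun i => z (Sum.inl (some i)))
        (fun k => Option.elim k (z (Sum.inl none)) fun j => z (Sum.inr j)) i)
        (by rintro (i | _ | k) <;> exact .coord _)
    refine (exists_real (Q := fun t x => ∃ y, Q x fun k => Option.elim k t y)
      (ih (Q := fun z y => Q (fun i => z (some i)) fun k => Option.elim k (z none) y)
        hcomp)).congr fun x =>
      ⟨fun ⟨t, y, hy⟩ => ⟨_, hy⟩, fun ⟨y, hy⟩ => ⟨y none, fun k => y (some k), ?_⟩⟩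
    convert hy with k
    cases k <;> rfl

theorem forall_pi [Finite κ] {Q : (σ → ℝ) → (κ → ℝ) → Prop}
    (h : IsSemialgebraic fun z : σ ⊕ κ → ℝ => Q (fun i => z (.inl i)) fun k => z (.inr k)) :
    IsSemialgebraic fun x => ∀ y, Q x y :=
  (exists_pi (Q := fun x y => ¬ Q x y) h.not).not.congr fun _ => not_exists_not

end IsSemialgebraic

/-- Semialgebraic predicates of one real variable. -/
def IsSemialgebraic₁ (P : ℝ → Prop) : Prop :=
  IsSemialgebraic fun z : Unit → ℝ => P (z ())

/-- Semialgebraic relations between two real variables. -/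
def IsSemialgebraic₂ (R : ℝ → ℝ → Prop) : Prop :=
  IsSemialgebraic fun z : Fin 2 → ℝ => R (z 0) (z 1)

namespace IsSemialgebraic₂

variable {R : ℝ → ℝ → Prop}

theorem comp (hR : IsSemialgebraic₂ R) {a b : (σ → ℝ) → ℝ} (ha : IsPolynomialFun a)
    (hb : IsPolynomialFun b) : IsSemialgebraic fun z => R (a z) (b z) :=
  IsSemialgebraic.comp hR (F := fun z => ![a z, b z]) (Fin.forall_fin_two.2 ⟨ha, hb⟩)

theorem swap (hR : IsSemialgebraic₂ R) : IsSemialgebraic₂ fun t s => R s t :=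
  hR.comp (.coord 1) (.coord 0)

theorem right (hR : IsSemialgebraic₂ R) (t : ℝ) : IsSemialgebraic₁ (R t) :=
  hR.comp (.const t) (.coord ())

theorem eventually_nhdsGT (hR : IsSemialgebraic₂ R) :
    IsSemialgebraic₁ fun t => ∀ᶠ s in 𝓝[>] t, R t s := by
  have h : IsSemialgebraic₁ fun t => ∃ e, t < e ∧ ∀ s, t < s → s < e → R t s := by
    refine .exists_real (.and (.lt (.coord _) (.coord _)) ?_)
    refine .forall_real (Q := fun s z => z (some ()) < s → s < z none → R (z (some ())) s) ?_
    exact .imp (.lt (.coord _) (.coord _))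
      (.imp (.lt (.coord _) (.coord _)) (hR.comp (.coord _) (.coord _)))
  refine IsSemialgebraic.congr h fun z => ?_
  beta_reduce
  rw [Filter.eventually_iff, mem_nhdsGT_iff_exists_Ioo_subset]
  exact exists_congr fun e => and_congr_right fun _ => ⟨fun h s hs => h s hs.1 hs.2,
    fun h s hs hs' => h ⟨hs, hs'⟩⟩

theorem eventually_nhdsLT (hR : IsSemialgebraic₂ R) :
    IsSemialgebraic₁ fun t => ∀ᶠ s in 𝓝[<] t, R t s := by
  have h : IsSemialgebraic₁ fun t => ∃ e, e < t ∧ ∀ s, e < s → s < t → R t s := by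
    refine .exists_real (.and (.lt (.coord _) (.coord _)) ?_)
    refine .forall_real (Q := fun s z => z none < s → s < z (some ()) → R (z (some ())) s) ?_
    exact .imp (.lt (.coord _) (.coord _))
      (.imp (.lt (.coord _) (.coord _)) (hR.comp (.coord _) (.coord _)))
  refine IsSemialgebraic.congr h fun z => ?_
  beta_reduce
  rw [Filter.eventually_iff, mem_nhdsLT_iff_exists_Ioo_subset]
  exact exists_congr fun e => and_congr_right fun _ => ⟨fun h s hs => h s hs.1 hs.2,
    fun h s hs hs' => h ⟨hs, hs'⟩⟩

end IsSemialgebraic₂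

theorem exists_eventually_sign_eval_eq (q : Polynomial ℝ) {a : ℝ} {l : Filter ℝ} (hl : l ≤ 𝓝 a)
    {ε : SignType} (hε : ∀ᶠ s in l, sign (s - a) = ε) :
    ∃ η, ∀ᶠ s in l, sign (q.eval s) = η := by
  rcases eq_or_ne q 0 with rfl | hq
  · exact ⟨0, by simp⟩
  obtain ⟨g, hg, hdvd⟩ := q.exists_eq_pow_rootMultiplicity_mul_and_not_dvd hq a
  have hga : g.eval a ≠ 0 := fun h => hdvd (Polynomial.dvd_iff_isRoot.2 h)
  have hsign : ∀ᶠ s in 𝓝 a, sign (g.eval s) = sign (g.eval a) :=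
    (ContinuousAt.comp (f := fun s => g.eval s) (continuousAt_sign_of_ne_zero hga)
      g.continuous.continuousAt).eventually_mem (isOpen_discrete {sign (g.eval a)} |>.mem_nhds rfl)
  generalize q.rootMultiplicity a = m at hg
  refine ⟨ε ^ m * sign (g.eval a), ?_⟩
  filter_upwards [hε, hl hsign] with s hs hgs
  rw [hg]
  simp [sign_mul, sign_pow, hs, hgs]

theorem IsSemialgebraic₁.eventually_or_eventually_not {P : ℝ → Prop} (hP : IsSemialgebraic₁ P)
    {a : ℝ} {l : Filter ℝ} (hl : l ≤ 𝓝 a) {ε : SignType} (hε : ∀ᶠ s in l, sign (s - a) = ε) :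
    (∀ᶠ s in l, P s) ∨ ∀ᶠ s in l, ¬ P s := by
  obtain ⟨T, hT, h⟩ := hP
  have hgerm (r : MvPolynomial Unit ℝ) :
      ∃ η, ∀ᶠ s in l, sign (MvPolynomial.eval (fun _ => s) r) = η := by
    obtain ⟨η, hη⟩ := exists_eventually_sign_eval_eq
      (MvPolynomial.eval₂ Polynomial.C (fun _ => Polynomial.X) r) hl hε
    refine ⟨η, hη.mono fun s hs => ?_⟩
    rw [← hs, MvPolynomial.polynomial_eval_eval₂]
    simp [MvPolynomial.eval₂_eq, MvPolynomial.eval_eq]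
  choose η hη using hgerm
  have hall : ∀ᶠ s in l, ∀ r ∈ T, sign (MvPolynomial.eval (fun _ => s) r) = η r :=
    (eventually_all_finite hT).2 fun r _ => hη r
  by_cases hex : ∃ s, (∀ r ∈ T, sign (MvPolynomial.eval (fun _ => s) r) = η r) ∧ P s
  · obtain ⟨s₀, hs₀, hPs₀⟩ := hex
    exact .inl (hall.mono fun s hs => h (fun _ => s₀) (fun _ => s)
      (fun r hr => (hs₀ r hr).trans (hs r hr).symm) hPs₀)
  · exact .inr (hall.mono fun s hs hPs => hex ⟨s, hs, hPs⟩)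

theorem IsSemialgebraic₁.eventually_nhdsGT_or {P : ℝ → Prop} (hP : IsSemialgebraic₁ P) (a : ℝ) :
    (∀ᶠ s in 𝓝[>] a, P s) ∨ ∀ᶠ s in 𝓝[>] a, ¬ P s :=
  hP.eventually_or_eventually_not nhdsWithin_le_nhds
    (eventually_mem_nhdsWithin.mono fun _ hs => sign_pos (sub_pos.2 hs))

theorem IsSemialgebraic₁.eventually_nhdsLT_or {P : ℝ → Prop} (hP : IsSemialgebraic₁ P) (a : ℝ) :
    (∀ᶠ s in 𝓝[<] a, P s) ∨ ∀ᶠ s in 𝓝[<] a, ¬ P s :=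
  hP.eventually_or_eventually_not nhdsWithin_le_nhds
    (eventually_mem_nhdsWithin.mono fun _ hs => sign_neg (sub_neg.2 hs))

end Semialgebraic

section Monotonicity

theorem monotoneOn_of_eventually_nhdsWithin {X α : Type*} [ConditionallyCompleteLinearOrder X]
    [DenselyOrdered X] [TopologicalSpace X] [OrderTopology X] [Preorder α] {s : Set X}
    [s.OrdConnected] {h : X → α}
    (hs : ∀ t ∈ s, ∀ᶠ u in 𝓝[s] t, (t < u → h t ≤ h u) ∧ (u < t → h u ≤ h t)) :
    MonotoneOn h s := by
  intro x hx y hy hxy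
  set S := {t ∈ Icc x y | h x ≤ h t}
  have hxS : x ∈ S := ⟨left_mem_Icc.2 hxy, le_rfl⟩
  have hS : IsLUB S (sSup S) := isLUB_csSup ⟨x, hxS⟩ ⟨y, fun t ht => ht.1.2⟩
  have hz : sSup S ∈ Icc x y := ⟨hS.1 hxS, hS.2 fun t ht => ht.1.2⟩
  have hloc := eventually_nhdsWithin_iff.1 (hs _ (s.Icc_subset hx hy hz))
  have hzS : h x ≤ h (sSup S) := by
    obtain ⟨u, huS, hu⟩ :=
      ((hS.frequently_mem ⟨x, hxS⟩).and_eventually (nhdsWithin_le_nhds hloc)).exists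
    rcases (hS.1 huS).eq_or_lt with heq | hlt
    · exact heq ▸ huS.2
    · exact huS.2.trans ((hu (s.Icc_subset hx hy huS.1)).2 hlt)
  rcases hz.2.eq_or_lt with heq | hlt
  · exact heq ▸ hzS
  · have := nhdsGT_neBot_of_exists_gt ⟨y, hlt⟩
    obtain ⟨u, hu, hzu, huy⟩ :=
      ((hloc.filter_mono nhdsWithin_le_nhds).and (Ioo_mem_nhdsGT hlt)).exists
    have huI : u ∈ Icc x y := ⟨hz.1.trans hzu.le, huy.le⟩
    exact absurd (hS.1 ⟨huI, hzS.trans ((hu (s.Icc_subset hx hy huI)).1 hzu)⟩) hzu.not_ge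

theorem countable_setOf_eventually_lt {X α : Type*} [TopologicalSpace X]
    [SecondCountableTopology X] [Preorder α] (h : X → α) :
    {t | ∀ᶠ s in 𝓝[≠] t, h t < h s}.Countable := by
  have hbasis := TopologicalSpace.isBasis_countableBasis X
  refine ((TopologicalSpace.countable_countableBasis X).biUnion fun U _ =>
    Set.Subsingleton.countable (s := {t ∈ U | ∀ s ∈ U, s ≠ t → h t < h s}) ?_).mono ?_
  · intro t ht s hs
    by_contra hne
    exact (ht.2 s hs.1 (Ne.symm hne)).asymm (hs.2 t ht.1 hne)
  · intro t ht
    obtain ⟨U, hU, htU, hsub⟩ := hbasis.mem_nhds_iff.1 (eventually_nhdsWithin_iff.1 ht)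
    exact mem_biUnion hU ⟨htU, fun s hs hst => hsub hs hst⟩

theorem not_eventually_nhdsLT_eventually_lt {α : Type*} [Preorder α] (h : ℝ → α) (c : ℝ) :
    ¬ ∀ᶠ t in 𝓝[<] c, ∀ᶠ s in 𝓝[≠] t, h t < h s := by
  intro hev
  obtain ⟨b, hb, hsub⟩ := mem_nhdsLT_iff_exists_Ioo_subset.1 hev
  exact (mem_Iio.1 hb).not_ge
    (Cardinal.Real.Ioo_countable_iff.1 ((countable_setOf_eventually_lt h).mono hsub))

theorem eventually_forall_mem_Ioo {P : ℝ → Prop} {c : ℝ} (hP : ∀ᶠ t in 𝓝[<] c, P t) :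
    ∀ᶠ b in 𝓝[<] c, ∀ t ∈ Ioo b c, P t := by
  obtain ⟨e, he, hsub⟩ := mem_nhdsLT_iff_exists_Ioo_subset.1 hP
  filter_upwards [Ioo_mem_nhdsLT he] with b hb t ht
  exact hsub ⟨hb.1.trans ht.1, ht.2⟩

variable {α : Type*} [LinearOrder α] {h : ℝ → α}

theorem IsSemialgebraic₂.eventually_monotoneOn (hh : IsSemialgebraic₂ fun t s => h t < h s)
    {c : ℝ} (hright : ∀ᶠ t in 𝓝[<] c, ¬ ∀ᶠ s in 𝓝[>] t, h s < h t)
    (hleft : ∀ᶠ t in 𝓝[<] c, ¬ ∀ᶠ s in 𝓝[<] t, h t < h s) :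
    ∀ᶠ b in 𝓝[<] c, MonotoneOn h (Ioo b c) := by
  refine (eventually_forall_mem_Ioo (hright.and hleft)).mono fun b hb =>
    monotoneOn_of_eventually_nhdsWithin fun t ht => nhdsWithin_le_nhds ?_
  have hgt := ((hh.swap.right t).eventually_nhdsGT_or t).resolve_left (hb t ht).1
  have hlt := ((hh.right t).eventually_nhdsLT_or t).resolve_left (hb t ht).2
  filter_upwards [eventually_nhdsWithin_iff.1 hgt, eventually_nhdsWithin_iff.1 hlt] with u hu hu'
  exact ⟨fun h => not_lt.1 (hu h), fun h => not_lt.1 (hu' h)⟩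

theorem IsSemialgebraic₂.eventually_monotoneOn_or_antitoneOn
    (hh : IsSemialgebraic₂ fun t s => h t < h s) (c : ℝ) :
    ∀ᶠ b in 𝓝[<] c, MonotoneOn h (Ioo b c) ∨ AntitoneOn h (Ioo b c) := by
  have mono := hh.eventually_monotoneOn (c := c)
  have anti := IsSemialgebraic₂.eventually_monotoneOn (h := OrderDual.toDual ∘ h) (c := c) hh.swap
  have punctured {Q : ℝ → ℝ → Prop} (hl : ∀ᶠ t in 𝓝[<] c, ∀ᶠ s in 𝓝[<] t, Q t s)
      (hr : ∀ᶠ t in 𝓝[<] c, ∀ᶠ s in 𝓝[>] t, Q t s) :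
      ∀ᶠ t in 𝓝[<] c, ∀ᶠ s in 𝓝[≠] t, Q t s := by
    filter_upwards [hl, hr] with t hlt hrt
    rw [← nhdsLT_sup_nhdsGT]
    exact eventually_sup.2 ⟨hlt, hrt⟩
  have no_min := not_eventually_nhdsLT_eventually_lt h c
  have no_max := not_eventually_nhdsLT_eventually_lt (OrderDual.toDual ∘ h) c
  have not_both {l : ℝ → Filter ℝ} [∀ t, (l t).NeBot]
      (h₁ : ∀ᶠ t in 𝓝[<] c, ∀ᶠ s in l t, h t < h s)
      (h₂ : ∀ᶠ t in 𝓝[<] c, ∀ᶠ s in l t, h s < h t) : False := by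
    obtain ⟨t, ht₁, ht₂⟩ := (h₁.and h₂).exists
    obtain ⟨s, hs₁, hs₂⟩ := (ht₁.and ht₂).exists
    exact hs₁.asymm hs₂
  have lt_right := hh.swap.eventually_nhdsGT.eventually_nhdsLT_or c
  have gt_left := hh.eventually_nhdsLT.eventually_nhdsLT_or c
  rcases hh.eventually_nhdsGT.eventually_nhdsLT_or c with gt_right | not_gt_right
  · rcases gt_left with gt_left | not_gt_left
    · exact (no_min (punctured gt_left gt_right)).elim
    · exact (mono (lt_right.resolve_left (not_both gt_right)) not_gt_left).mono fun _ => .inl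
  · rcases hh.swap.eventually_nhdsLT.eventually_nhdsLT_or c with lt_left | not_lt_left
    · rcases lt_right with lt_right | not_lt_right
      · exact (no_max (punctured lt_left lt_right)).elim
      · exact (mono not_lt_right (gt_left.resolve_left fun h => not_both h lt_left)).mono
          fun _ => .inl
    · exact (anti not_gt_right not_lt_left).mono fun _ => .inr

end Monotonicity

section Families

variable {κ : Type*}

/-- Semialgebraic families of subsets of a real affine space, parametrised by one real variable. -/
def IsSemialgebraicFamily (S : ℝ → (κ → ℝ) → Prop) : Prop :=
  IsSemialgebraic fun z : Option κ → ℝ => S (z none) fun k => z (some k)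

/-- The minimisers of `q` in the fibre over `t` of the family `S`. -/
def IsFiberMinimizer (S : ℝ → (κ → ℝ) → Prop) (q : (κ → ℝ) → ℝ) (t : ℝ) (x : κ → ℝ) : Prop :=
  S t x ∧ ∀ y, S t y → q x ≤ q y

theorem isCompact_setOf_isFiberMinimizer {S : ℝ → (κ → ℝ) → Prop} {q : (κ → ℝ) → ℝ}
    (hq : Continuous q) {t : ℝ} (hS : IsCompact {x | S t x}) :
    IsCompact {x | IsFiberMinimizer S q t x} := by
  have hset : {x | IsFiberMinimizer S q t x} =
      {x | S t x} ∩ ⋂ (y) (_ : S t y), {x | q x ≤ q y} := by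
    ext x
    simp [IsFiberMinimizer]
  rw [hset]
  exact hS.inter_right
    (isClosed_iInter fun y => isClosed_iInter fun _ => isClosed_le hq continuous_const)

theorem exists_isFiberMinimizer {S : ℝ → (κ → ℝ) → Prop} {q : (κ → ℝ) → ℝ} (hq : Continuous q)
    {t : ℝ} (hS : IsCompact {x | S t x}) (hne : ∃ x, S t x) : ∃ x, IsFiberMinimizer S q t x := by
  obtain ⟨x, hx, hmin⟩ := hS.exists_isMinOn hne hq.continuousOn
  exact ⟨x, hx, fun y hy => hmin hy⟩

namespace IsSemialgebraicFamily

variable {S : ℝ → (κ → ℝ) → Prop} {q : (κ → ℝ) → ℝ}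

theorem comp {τ : Type*} (hS : IsSemialgebraicFamily S) {a : (τ → ℝ) → ℝ} {F : (τ → ℝ) → κ → ℝ}
    (ha : IsPolynomialFun a) (hF : ∀ k, IsPolynomialFun fun z => F z k) :
    IsSemialgebraic fun z => S (a z) (F z) :=
  IsSemialgebraic.comp hS (F := fun z o => Option.elim o (a z) (F z)) fun
    | none => ha
    | some k => hF k

variable [Finite κ]

theorem exists_mem (hS : IsSemialgebraicFamily S) : IsSemialgebraic₁ fun t => ∃ x, S t x :=
  .exists_pi (Q := fun z x => S (z ()) x) (hS.comp (.coord _) fun _ => .coord _)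

theorem isFiberMinimizer (hS : IsSemialgebraicFamily S) (hq : IsPolynomialFun q) :
    IsSemialgebraicFamily (IsFiberMinimizer S q) := by
  refine IsSemialgebraic.and hS (.forall_pi
    (Q := fun (z : Option κ → ℝ) y => S (z none) y → q (fun k => z (some k)) ≤ q y) ?_)
  exact .imp (hS.comp (.coord _) fun _ => .coord _)
    (.le (hq.comp fun _ => .coord _) (hq.comp fun _ => .coord _))

/-- The fibres are cut down by minimising the coordinates listed in `l` one after the other. -/
theorem exists_subfamily_eq (l : List κ) (hS : IsSemialgebraicFamily S)
    (hc : ∀ t, IsCompact {x | S t x}) (hne : ∀ t, ∃ x, S t x) :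
    ∃ S' : ℝ → (κ → ℝ) → Prop, IsSemialgebraicFamily S' ∧ (∀ t x, S' t x → S t x) ∧
      (∀ t, ∃ x, S' t x) ∧ ∀ t x y, S' t x → S' t y → ∀ i ∈ l, x i = y i := by
  induction l generalizing S with
  | nil => exact ⟨S, hS, fun _ _ h => h, hne, by simp⟩
  | cons i l ih =>
    have hi : Continuous fun x : κ → ℝ => x i := continuous_apply i
    obtain ⟨S', hS', hsub, hne', heq⟩ := ih (hS.isFiberMinimizer (.coord i))
      (fun t => isCompact_setOf_isFiberMinimizer hi (hc t))
      fun t => exists_isFiberMinimizer hi (hc t) (hne t)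
    refine ⟨S', hS', fun t x hx => (hsub t x hx).1, hne', fun t x y hx hy =>
      List.forall_mem_cons.2 ⟨?_, heq t x y hx hy⟩⟩
    obtain ⟨hxS, hxmin⟩ := hsub t x hx
    obtain ⟨hyS, hymin⟩ := hsub t y hy
    exact (hxmin y hyS).antisymm (hymin x hxS)

theorem exists_section_of_nonempty (hS : IsSemialgebraicFamily S)
    (hc : ∀ t, IsCompact {x | S t x}) (hne : ∀ t, ∃ x, S t x) :
    ∃ x : ℝ → κ → ℝ, IsSemialgebraicFamily (fun t y => y = x t) ∧ ∀ t, S t (x t) := by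
  have := Fintype.ofFinite κ
  obtain ⟨S', hS', hsub, hne', heq⟩ := hS.exists_subfamily_eq Finset.univ.toList hc hne
  choose x hx using hne'
  refine ⟨x, IsSemialgebraic.congr hS' fun z => ⟨fun hz => ?_, fun hz => ?_⟩,
    fun t => hsub t _ (hx t)⟩
  · exact funext fun i => heq _ _ _ hz (hx _) i (by simp)
  · beta_reduce at hz
    exact hz ▸ hx _

theorem exists_section (hS : IsSemialgebraicFamily S) (hc : ∀ t, IsCompact {x | S t x}) :
    ∃ x : ℝ → κ → ℝ, IsSemialgebraicFamily (fun t y => y = x t) ∧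
      ∀ t, (∃ y, S t y) → S t (x t) := by
  have := Fintype.ofFinite κ
  let S₀ : ℝ → (κ → ℝ) → Prop := fun t x => S t x ∨ (¬ ∃ y, S t y) ∧ ∑ i, x i ^ 2 = 0
  have hzero (x : κ → ℝ) : ∑ i, x i ^ 2 = 0 ↔ x = 0 := by
    simp [Finset.sum_eq_zero_iff_of_nonneg, sq_nonneg, funext_iff]
  have hS₀ : IsSemialgebraicFamily S₀ := by
    refine IsSemialgebraic.or hS (.and (.not ?_) (.eq (.sum fun i => (IsPolynomialFun.coord
      (some i)).pow 2) (.const 0)))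
    exact hS.exists_mem.comp (F := fun z _ => z none) fun _ => .coord _
  have hfib (t : ℝ) : (∃ y, S t y) ∧ S₀ t = S t ∨ (¬ ∃ y, S t y) ∧ {x | S₀ t x} = {0} := by
    by_cases h : ∃ y, S t y
    · exact .inl ⟨h, funext fun x => by simp [S₀, h]⟩
    · exact .inr ⟨h, ext fun x => by simp [S₀, hzero, not_exists.1 h]⟩
  obtain ⟨x, hx, hxS₀⟩ := hS₀.exists_section_of_nonempty
    (fun t => (hfib t).elim (fun h => h.2 ▸ hc t) fun h => h.2 ▸ isCompact_singleton)
    fun t => (hfib t).elim (fun h => h.2 ▸ h.1)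
      fun h => ⟨0, (h.2.symm ▸ rfl : (0 : κ → ℝ) ∈ {x | S₀ t x})⟩
  exact ⟨x, hx, fun t ht => (hxS₀ t).resolve_right fun h => h.1 ht⟩

theorem comp_section {x : ℝ → κ → ℝ} (hx : IsSemialgebraicFamily fun t y => y = x t)
    (hq : IsPolynomialFun q) : IsSemialgebraic₂ fun t s => q (x t) < q (x s) := by
  have h : IsSemialgebraic₂ fun t s => ∃ u, ∃ v, u = x t ∧ v = x s ∧ q u < q v := by
    refine .exists_pi (Q := fun z u => ∃ v, u = x (z 0) ∧ v = x (z 1) ∧ q u < q v) (.exists_pi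
      (Q := fun z v => (fun k => z (Sum.inr k)) = x (z (Sum.inl 0)) ∧ v = x (z (Sum.inl 1)) ∧
        q (fun k => z (Sum.inr k)) < q v) ?_)
    exact (hx.comp (.coord _) fun _ => .coord _).and ((hx.comp (.coord _) fun _ => .coord _).and
      (.lt (hq.comp fun _ => .coord _) (hq.comp fun _ => .coord _)))
  exact IsSemialgebraic.congr h fun z => by simp

end IsSemialgebraicFamily

theorem exists_minimizing_section [Finite κ] {V : Set (κ → ℝ)} {p N : (κ → ℝ) → ℝ}
    (hV : IsSemialgebraic (· ∈ V)) (hVc : IsCompact V) (hp : IsPolynomialFun p)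
    (hN : IsPolynomialFun N) :
    ∃ x : ℝ → κ → ℝ, (IsSemialgebraicFamily fun t y => y = x t) ∧
      ∀ y ∈ V, x (p y) ∈ V ∧ p (x (p y)) = p y ∧ N (x (p y)) ≤ N y := by
  let S : ℝ → (κ → ℝ) → Prop := fun t y => y ∈ V ∧ p y = t
  have hS : IsSemialgebraicFamily S :=
    .and (hV.comp fun _ => .coord _) (.eq (hp.comp fun _ => .coord _) (.coord _))
  have hSc (t : ℝ) : IsCompact {y | S t y} :=
    hVc.inter_right (isClosed_eq hp.continuous continuous_const)
  obtain ⟨x, hx, hmin⟩ := (hS.isFiberMinimizer hN).exists_section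
    fun t => isCompact_setOf_isFiberMinimizer hN.continuous (hSc t)
  refine ⟨x, hx, fun y hy => ?_⟩
  obtain ⟨⟨hxV, hxp⟩, hle⟩ :=
    hmin (p y) (exists_isFiberMinimizer hN.continuous (hSc _) ⟨y, hy, rfl⟩)
  exact ⟨hxV, hxp, hle y ⟨hy, rfl⟩⟩

end Families

section KurdykaLojasiewicz

theorem exists_arclength {κ : Type*} [Fintype κ] {x : ℝ → κ → ℝ} {s : Set ℝ}
    (hx : ∀ i, MonotoneOn (fun t => x t i) s ∨ AntitoneOn (fun t => x t i) s) :
    ∃ Ψ : ℝ → ℝ, (∀ t, Ψ t ≤ ∑ i, |x t i|) ∧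
      ∀ t ∈ s, ∀ u ∈ s, t ≤ u → ∑ i, |x u i - x t i| = Ψ u - Ψ t := by
  have hcoord (i : κ) : ∃ ψ : ℝ → ℝ, (∀ t, ψ t ≤ |x t i|) ∧
      ∀ t ∈ s, ∀ u ∈ s, t ≤ u → |x u i - x t i| = ψ u - ψ t := by
    rcases hx i with hmono | hanti
    · exact ⟨fun t => x t i, fun t => le_abs_self _,
        fun t ht u hu htu => abs_of_nonneg (sub_nonneg.2 (hmono ht hu htu))⟩
    · refine ⟨fun t => -x t i, fun t => neg_le_abs _, fun t ht u hu htu => ?_⟩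
      rw [abs_of_nonpos (sub_nonpos.2 (hanti ht hu htu))]
      ring
  choose ψ hψ hψ' using hcoord
  refine ⟨fun t => ∑ i, ψ i t, fun t => Finset.sum_le_sum fun i _ => hψ i t,
    fun t ht u hu htu => ?_⟩
  rw [← Finset.sum_sub_distrib]
  exact Finset.sum_congr rfl fun i _ => hψ' i t ht u hu htu

theorem le_mul_of_le_mul_add_sq {K M M' d e : ℝ} (hK : 0 ≤ K) (hM : 0 ≤ M) (hMM' : M < M')
    (hd : 0 ≤ d) (he : e ≤ M * d + K * d ^ 2) (he' : e < M' * (M' - M) / (K + 1)) :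
    e ≤ M' * d := by
  rw [lt_div_iff₀ (by positivity)] at he'
  rcases le_total ((K + 1) * d) (M' - M) with h | h
  · nlinarith [mul_le_mul_of_nonneg_left h hd]
  · refine le_of_mul_le_mul_right (he'.le.trans ?_) (by positivity : 0 < K + 1)
    calc M' * (M' - M) ≤ M' * ((K + 1) * d) := mul_le_mul_of_nonneg_left h (hM.trans hMM'.le)
      _ = M' * d * (K + 1) := by ring

theorem sub_le_mul_sub_of_lt {Ψ : ℝ → ℝ} {K M M' t₁ t₂ : ℝ} (hK : 0 ≤ K) (hM : 0 ≤ M)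
    (hMM' : M < M') (h₁₂ : t₁ ≤ t₂) (hΨ : MonotoneOn Ψ (Icc t₁ t₂))
    (hlip : ∀ t ∈ Icc t₁ t₂, ∀ s ∈ Icc t₁ t₂, t ≤ s →
      s - t ≤ M * (Ψ s - Ψ t) + K * (Ψ s - Ψ t) ^ 2) :
    t₂ - t₁ ≤ M' * (Ψ t₂ - Ψ t₁) := by
  set ε := M' * (M' - M) / (K + 1)
  have hε : 0 < ε := div_pos (mul_pos (hM.trans_lt hMM') (sub_pos.2 hMM')) (by positivity)
  have hstep : ∀ t ∈ Icc t₁ t₂, ∀ s ∈ Icc t₁ t₂, t ≤ s → s - t < ε →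
      s - t ≤ M' * (Ψ s - Ψ t) := fun t ht s hs hts hst =>
    le_mul_of_le_mul_add_sq hK hM hMM' (sub_nonneg.2 (hΨ ht hs hts)) (hlip t ht s hs hts) hst
  have hmono : MonotoneOn (fun t => M' * Ψ t - t) (Icc t₁ t₂) := by
    refine monotoneOn_of_eventually_nhdsWithin fun t ht => ?_
    filter_upwards [nhdsWithin_le_nhds (Metric.ball_mem_nhds t hε), self_mem_nhdsWithin]
      with u hu huI
    rw [Metric.mem_ball, Real.dist_eq, abs_lt] at hu
    constructor <;> intro h
    · linarith [hstep t ht u huI h.le (by linarith)]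
    · linarith [hstep u huI t ht h.le (by linarith)]
  linarith [hmono (left_mem_Icc.2 h₁₂) (right_mem_Icc.2 h₁₂) h₁₂]

theorem sub_le_mul_sub {Ψ : ℝ → ℝ} {K M t₁ t₂ : ℝ} (hK : 0 ≤ K) (hM : 0 ≤ M) (h₁₂ : t₁ ≤ t₂)
    (hΨ : MonotoneOn Ψ (Icc t₁ t₂))
    (hlip : ∀ t ∈ Icc t₁ t₂, ∀ s ∈ Icc t₁ t₂, t ≤ s →
      s - t ≤ M * (Ψ s - Ψ t) + K * (Ψ s - Ψ t) ^ 2) :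
    t₂ - t₁ ≤ M * (Ψ t₂ - Ψ t₁) := by
  have hlim : Tendsto (fun M' => M' * (Ψ t₂ - Ψ t₁)) (𝓝[>] M) (𝓝 (M * (Ψ t₂ - Ψ t₁))) :=
    ((continuous_id.mul continuous_const).tendsto M).mono_left nhdsWithin_le_nhds
  exact ge_of_tendsto hlim (eventually_mem_nhdsWithin.mono fun M' hM' =>
    sub_le_mul_sub_of_lt hK hM hM' h₁₂ hΨ hlip)

/-- `Ψ` is a desingularizing function on the set of levels `s` for `p` restricted to `V`, the
slope of `p` at `x` being measured by `r x`. Where `Ψ` is differentiable and concave this is the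
Kurdyka-Łojasiewicz inequality `1 ≤ r x * Ψ' (p x)`; the integrated form needs no derivatives. -/
def IsDesingularizing {E : Type*} (p r : E → ℝ) (V : Set E) (s : Set ℝ) (Ψ : ℝ → ℝ) : Prop :=
  MonotoneOn Ψ s ∧ BddAbove (Ψ '' s) ∧
    ∀ x ∈ V, p x ∈ s → ∀ t ∈ s, p x ≤ t → t - p x ≤ r x * (Ψ t - Ψ (p x))

section Slopes

variable {E : Type*} {p r : E → ℝ} {V : Set E} {ρ Ψ : ℝ → ℝ} {b c K : ℝ}

theorem isDesingularizing_of_antitoneOn (hK : 0 ≤ K) (hρ₀ : ∀ t, 0 ≤ ρ t)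
    (hρ : AntitoneOn ρ (Ioo b c)) (hr : ∀ x ∈ V, p x ∈ Ioo b c → ρ (p x) ≤ r x)
    (hΨ : MonotoneOn Ψ (Ioo b c)) (hbdd : BddAbove (Ψ '' Ioo b c))
    (hlip : ∀ t ∈ Ioo b c, ∀ s ∈ Ioo b c, t ≤ s →
      s - t ≤ ρ t * (Ψ s - Ψ t) + K * (Ψ s - Ψ t) ^ 2) :
    IsDesingularizing p r V (Ioo b c) Ψ := by
  refine ⟨hΨ, hbdd, fun x hx hpx t ht hxt => ?_⟩
  have hI : Icc (p x) t ⊆ Ioo b c := Icc_subset_Ioo hpx.1 ht.2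
  have hlen : t - p x ≤ ρ (p x) * (Ψ t - Ψ (p x)) := by
    refine sub_le_mul_sub hK (hρ₀ _) hxt (hΨ.mono hI) fun u hu v hv huv =>
      (hlip u (hI hu) v (hI hv) huv).trans (add_le_add_left ?_ _)
    exact mul_le_mul_of_nonneg_right (hρ hpx (hI hu) hu.1)
      (sub_nonneg.2 (hΨ (hI hu) (hI hv) huv))
  exact hlen.trans (mul_le_mul_of_nonneg_right (hr x hx hpx) (sub_nonneg.2 (hΨ hpx ht hxt)))

theorem exists_isDesingularizing_of_monotoneOn (hbc : b < c) (hK : 0 ≤ K) (hρ₀ : ∀ t, 0 ≤ ρ t)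
    (hρ : MonotoneOn ρ (Ioo b c)) (hr : ∀ x ∈ V, p x ∈ Ioo b c → ρ (p x) ≤ r x)
    (hΨ : MonotoneOn Ψ (Ioo b c))
    (hlip : ∀ t ∈ Ioo b c, ∀ s ∈ Ioo b c, t ≤ s →
      s - t ≤ ρ t * (Ψ s - Ψ t) + K * (Ψ s - Ψ t) ^ 2) :
    ∃ a < c, ∃ Ψ', IsDesingularizing p r V (Ioo a c) Ψ' := by
  obtain ⟨a, hba, hac⟩ := exists_between hbc
  obtain ⟨a', hba', haa'⟩ := exists_between hba
  have hpos : 0 < ρ a := by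
    refine (hρ₀ a).lt_of_ne fun hzero => ?_
    have hI : Icc a' a ⊆ Ioo b c := Icc_subset_Ioo hba' hac
    have hlen : a - a' ≤ 0 * (Ψ a - Ψ a') := by
      refine sub_le_mul_sub hK le_rfl haa'.le (hΨ.mono hI) fun t ht s hs hts => ?_
      have hρt : ρ t = 0 := (hρ₀ t).antisymm' (hzero ▸ hρ (hI ht) ⟨hba, hac⟩ ht.2)
      exact hρt ▸ hlip t (hI ht) s (hI hs) hts
    linarith
  refine ⟨a, hac, fun t => t / ρ a, fun t _ s _ hts => div_le_div_of_nonneg_right hts hpos.le,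
    ⟨c / ρ a, ?_⟩, fun x hx hpx t _ hxt => ?_⟩
  · rintro _ ⟨t, ht, rfl⟩
    exact div_le_div_of_nonneg_right ht.2.le hpos.le
  · have hra : ρ a ≤ r x :=
      (hρ ⟨hba, hac⟩ ⟨hba.trans hpx.1, hpx.2⟩ hpx.1.le).trans (hr x hx ⟨hba.trans hpx.1, hpx.2⟩)
    rw [← sub_div, mul_div_assoc', le_div_iff₀ hpos, mul_comm]
    exact mul_le_mul_of_nonneg_right hra (sub_nonneg.2 hxt)

end Slopes

section Curves

variable {κ : Type*} [Fintype κ] {V : Set (κ → ℝ)} {p N : (κ → ℝ) → ℝ} {K : ℝ}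

theorem exists_isDesingularizing_of_section {x : ℝ → κ → ℝ} {b c : ℝ}
    (hbc : b < c) (hK : 0 ≤ K) (hVc : IsCompact V)
    (hlip : ∀ x ∈ V, ∀ y ∈ V,
      |p y - p x| ≤ √(N x) * ∑ i, |y i - x i| + K * (∑ i, |y i - x i|) ^ 2)
    (hx : ∀ t ∈ Ioo b c, x t ∈ V ∧ p (x t) = t) (hN : ∀ y ∈ V, N (x (p y)) ≤ N y)
    (hxmono : ∀ i, MonotoneOn (fun t => x t i) (Ioo b c) ∨ AntitoneOn (fun t => x t i) (Ioo b c))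
    (hNmono : MonotoneOn (fun t => N (x t)) (Ioo b c) ∨
      AntitoneOn (fun t => N (x t)) (Ioo b c)) :
    ∃ a < c, ∃ Ψ, IsDesingularizing p (fun y => √(N y)) V (Ioo a c) Ψ := by
  obtain ⟨Ψ, hΨle, hΨ⟩ := exists_arclength hxmono
  have hΨmono : MonotoneOn Ψ (Ioo b c) := fun t ht u hu htu =>
    sub_nonneg.1 (hΨ t ht u hu htu ▸ Finset.sum_nonneg fun i _ => abs_nonneg _)
  have hΨbdd : BddAbove (Ψ '' Ioo b c) := by
    obtain ⟨C, hC⟩ := hVc.isBounded.exists_norm_le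
    refine ⟨∑ _ : κ, C, ?_⟩
    rintro _ ⟨t, ht, rfl⟩
    exact (hΨle t).trans (Finset.sum_le_sum fun i _ =>
      (norm_le_pi_norm (x t) i).trans (hC _ (hx t ht).1))
  have hcurve : ∀ t ∈ Ioo b c, ∀ s ∈ Ioo b c, t ≤ s →
      s - t ≤ √(N (x t)) * (Ψ s - Ψ t) + K * (Ψ s - Ψ t) ^ 2 := fun t ht s hs hts => by
    have h := hlip (x t) (hx t ht).1 (x s) (hx s hs).1
    rw [(hx t ht).2, (hx s hs).2, hΨ t ht s hs hts] at h
    exact (le_abs_self _).trans h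
  have hr : ∀ y ∈ V, p y ∈ Ioo b c → √(N (x (p y))) ≤ √(N y) := fun y hy _ =>
    Real.sqrt_le_sqrt (hN y hy)
  rcases hNmono with hmono | hanti
  · exact exists_isDesingularizing_of_monotoneOn (ρ := fun t => √(N (x t))) hbc hK
      (fun t => Real.sqrt_nonneg _) (Real.sqrt_monotone.comp_monotoneOn hmono) hr hΨmono hcurve
  · exact ⟨b, hbc, Ψ, isDesingularizing_of_antitoneOn (ρ := fun t => √(N (x t))) hK
      (fun t => Real.sqrt_nonneg _) (Real.sqrt_monotone.comp_antitoneOn hanti) hr hΨmono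
      hΨbdd hcurve⟩

theorem exists_isDesingularizing (hV : IsSemialgebraic (· ∈ V)) (hVc : IsCompact V)
    (hp : IsPolynomialFun p) (hN : IsPolynomialFun N) (hK : 0 ≤ K)
    (hlip : ∀ x ∈ V, ∀ y ∈ V,
      |p y - p x| ≤ √(N x) * ∑ i, |y i - x i| + K * (∑ i, |y i - x i|) ^ 2) (c : ℝ) :
    ∃ a < c, ∃ Ψ, IsDesingularizing p (fun y => √(N y)) V (Ioo a c) Ψ := by
  obtain ⟨x, hx, hxV⟩ := exists_minimizing_section hV hVc hp hN
  have hlevels : IsSemialgebraicFamily fun t y => y ∈ V ∧ p y = t :=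
    .and (hV.comp fun _ => .coord _) (.eq (hp.comp fun _ => .coord _) (.coord _))
  rcases hlevels.exists_mem.eventually_nhdsLT_or c with hne | hempty
  · have hcoord := eventually_all.2 fun i =>
      (hx.comp_section (.coord i)).eventually_monotoneOn_or_antitoneOn c
    have hNx := (hx.comp_section hN).eventually_monotoneOn_or_antitoneOn c
    obtain ⟨b, ⟨hb, hbcoord, hbN⟩, hbc⟩ := ((eventually_forall_mem_Ioo hne).and
      (hcoord.and hNx)).and eventually_mem_nhdsWithin |>.exists
    refine exists_isDesingularizing_of_section hbc hK hVc hlip (fun t ht => ?_)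
      (fun y hy => (hxV y hy).2.2) hbcoord hbN
    obtain ⟨y, hy, rfl⟩ := hb t ht
    exact ⟨(hxV y hy).1, (hxV y hy).2.1⟩
  · obtain ⟨b, hb, hbc⟩ :=
      ((eventually_forall_mem_Ioo hempty).and eventually_mem_nhdsWithin).exists
    refine ⟨b, hbc, fun _ => 0, monotoneOn_const, ⟨0, ?_⟩,
      fun y hy hpy => (hb _ hpy ⟨y, hy, rfl⟩).elim⟩
    rintro _ ⟨t, _, rfl⟩
    rfl

end Curves

end KurdykaLojasiewicz

section Taylor

variable {σ : Type*} {a : (σ → ℝ) → ℝ}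

namespace IsPolynomialFun

theorem exists_abs_le_of_box (ha : IsPolynomialFun a) (B : ℝ) :
    ∃ C, 0 ≤ C ∧ ∀ x, (∀ k, |x k| ≤ B) → |a x| ≤ C := by
  have hbox : IsCompact (univ.pi fun _ : σ => Icc (-B) B) :=
    isCompact_univ_pi fun _ => isCompact_Icc
  obtain ⟨C, hC⟩ := hbox.exists_bound_of_continuousOn ha.continuous.continuousOn
  exact ⟨max C 0, le_max_right _ _, fun x hx =>
    (hC x fun k _ => abs_le.1 (hx k)).trans (le_max_left _ _)⟩

variable [Fintype σ]

theorem exists_sub_eq_sum_mul_sub (ha : IsPolynomialFun a) :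
    ∃ q : σ → (σ ⊕ σ → ℝ) → ℝ, (∀ k, IsPolynomialFun (q k)) ∧
      ∀ x y, a y - a x = ∑ k, q k (Sum.elim x y) * (y k - x k) := by
  classical
  obtain ⟨p, hp⟩ := ha
  simp only [hp]
  clear hp
  induction p using MvPolynomial.induction_on with
  | C c => exact ⟨fun _ _ => 0, fun _ => const 0, by simp⟩
  | add p₁ p₂ h₁ h₂ =>
    obtain ⟨q₁, hq₁, h₁⟩ := h₁
    obtain ⟨q₂, hq₂, h₂⟩ := h₂
    refine ⟨fun k z => q₁ k z + q₂ k z, fun k => (hq₁ k).add (hq₂ k), fun x y => ?_⟩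
    simp only [add_mul, Finset.sum_add_distrib, ← h₁, ← h₂, map_add]
    ring
  | mul_X p i h =>
    obtain ⟨q, hq, h⟩ := h
    have hpoly : IsPolynomialFun fun z : σ ⊕ σ → ℝ => MvPolynomial.eval (fun k => z (.inl k)) p :=
      comp (a := fun x => MvPolynomial.eval x p) ⟨p, fun _ => rfl⟩ fun k => coord (Sum.inl k)
    refine ⟨fun k z => q k z * z (.inr i) +
      MvPolynomial.eval (fun k => z (.inl k)) p * (Pi.single i 1 : σ → ℝ) k,
      fun k => ((hq k).mul (coord _)).add (hpoly.mul (const _)), fun x y => ?_⟩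
    calc MvPolynomial.eval y (p * .X i) - MvPolynomial.eval x (p * .X i)
        = (MvPolynomial.eval y p - MvPolynomial.eval x p) * y i
            + MvPolynomial.eval x p * (y i - x i) := by
          simp only [map_mul, MvPolynomial.eval_X]
          ring
      _ = _ := by
          rw [h, Finset.sum_mul]
          simp [add_mul, Finset.sum_add_distrib, Pi.single_apply, mul_right_comm]

theorem exists_abs_sub_le_of_box (ha : IsPolynomialFun a) (B : ℝ) :
    ∃ C, 0 ≤ C ∧ ∀ x y, (∀ k, |x k| ≤ B) → (∀ k, |y k| ≤ B) →
      |a y - a x| ≤ C * ∑ k, |y k - x k| := by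
  obtain ⟨q, hq, h⟩ := ha.exists_sub_eq_sum_mul_sub
  choose C hC hqC using fun k => (hq k).exists_abs_le_of_box B
  refine ⟨∑ k, C k, Finset.sum_nonneg fun k _ => hC k, fun x y hx hy => ?_⟩
  rw [h, Finset.mul_sum]
  refine (Finset.abs_sum_le_sum_abs _ _).trans (Finset.sum_le_sum fun k _ => ?_)
  rw [abs_mul]
  gcongr
  exact (hqC k _ (Sum.forall.2 ⟨hx, hy⟩)).trans
    (Finset.single_le_sum (fun l _ => hC l) (Finset.mem_univ k))

theorem exists_gradient (ha : IsPolynomialFun a) :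
    ∃ d : σ → (σ → ℝ) → ℝ, (∀ k, IsPolynomialFun (d k)) ∧
      (∀ x h, HasDerivAt (fun t : ℝ => a (x + t • h)) (∑ k, d k x * h k) 0) ∧
      ∀ B, ∃ C, 0 ≤ C ∧ ∀ x y, (∀ k, |x k| ≤ B) → (∀ k, |y k| ≤ B) →
        |a y - a x - ∑ k, d k x * (y k - x k)| ≤ C * (∑ k, |y k - x k|) ^ 2 := by
  obtain ⟨q, hq, h⟩ := ha.exists_sub_eq_sum_mul_sub
  refine ⟨fun k x => q k (Sum.elim x x), fun k => (hq k).comp (F := fun x => Sum.elim x x)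
    (Sum.forall.2 ⟨coord, coord⟩), fun x v => ?_, fun B => ?_⟩
  · have hcont : Continuous fun t : ℝ => ∑ k, q k (Sum.elim x (x + t • v)) * v k :=
      continuous_finsetSum _ fun k _ => ((hq k).continuous.comp
        (continuous_pi (Sum.forall.2 ⟨fun _ => by simpa using continuous_const,
          fun _ => by simpa using by fun_prop⟩))).mul_const _
    rw [hasDerivAt_iff_tendsto_slope]
    refine ((hcont.tendsto' 0 _ (by simp)).mono_left nhdsWithin_le_nhds).congr' ?_
    filter_upwards [self_mem_nhdsWithin] with t ht
    have ht : t ≠ 0 := ht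
    simp only [slope, vsub_eq_sub, smul_eq_mul, sub_zero, zero_smul, add_zero, h, Pi.add_apply,
      Pi.smul_apply, add_sub_cancel_left, Finset.mul_sum]
    exact Finset.sum_congr rfl fun k _ => by field_simp
  · choose C hC hqC using fun k => (hq k).exists_abs_sub_le_of_box B
    refine ⟨∑ k, C k, Finset.sum_nonneg fun k _ => hC k, fun x y hx hy => ?_⟩
    set S := ∑ k, |y k - x k|
    have hlip (k : σ) : |q k (Sum.elim x y) - q k (Sum.elim x x)| ≤ C k * S := by
      simpa [S] using hqC k (Sum.elim x x) (Sum.elim x y) (Sum.forall.2 ⟨hx, hx⟩)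
        (Sum.forall.2 ⟨hx, hy⟩)
    rw [h, ← Finset.sum_sub_distrib, sq, ← mul_assoc, Finset.sum_mul, Finset.sum_mul]
    refine (Finset.abs_sum_le_sum_abs _ _).trans (Finset.sum_le_sum fun k _ => ?_)
    rw [← sub_mul, abs_mul]
    gcongr
    · exact mul_nonneg (hC k) (Finset.sum_nonneg fun _ _ => abs_nonneg _)
    · exact hlip k
    · exact Finset.single_le_sum (f := fun k => |y k - x k|) (fun _ _ => abs_nonneg _)
        (Finset.mem_univ k)

end IsPolynomialFun

end Taylor

section FourthHarmonic

open Real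

/-- The trigonometric functions `A + α cos 4t + β sin 4t`, which is what the cost becomes along a
Givens rotation. -/
def IsFourthHarmonic (h : ℝ → ℝ) : Prop :=
  ∃ A α β : ℝ, ∀ t, h t = A + α * cos (4 * t) + β * sin (4 * t)

/-- `θ` is a global maximizer of `h`, of smallest absolute value among the global maximizers. -/
def IsMinAbsMaximizer (h : ℝ → ℝ) (θ : ℝ) : Prop :=
  (∀ t, h t ≤ h θ) ∧ ∀ t, (∀ s, h s ≤ h t) → |θ| ≤ |t|

theorem IsMinAbsMaximizer.eq_zero {h : ℝ → ℝ} {θ : ℝ} (hθ : IsMinAbsMaximizer h θ)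
    (hle : h θ ≤ h 0) : θ = 0 :=
  abs_nonpos_iff.1 <| (hθ.2 0 fun s => (hθ.1 s).trans hle).trans_eq abs_zero

theorem IsMinAbsMaximizer.abs_le_half_of_periodic {h : ℝ → ℝ} {θ c : ℝ}
    (hθ : IsMinAbsMaximizer h θ) (hper : Function.Periodic h c) (hc : 0 < c) : |θ| ≤ c / 2 := by
  have heq : h (θ - round (θ / c) * c) = h θ := hper.sub_int_mul_eq _
  calc |θ| ≤ |θ - round (θ / c) * c| := hθ.2 _ fun s => (hθ.1 s).trans_eq heq.symm
    _ = |θ / c - round (θ / c)| * c := by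
      rw [← abs_of_pos hc, ← abs_mul, abs_of_pos hc, sub_mul, div_mul_cancel₀ _ hc.ne']
    _ ≤ 1 / 2 * c := by gcongr; exact abs_sub_round _
    _ = c / 2 := by ring

theorem abs_sin_mul_abs_le {x : ℝ} (hx : |x| ≤ π) : |sin x| * |x| ≤ 2 * (1 - cos x) := by
  set ψ := |x| / 2 with hψ
  have hx2 : |x| = 2 * ψ := by rw [hψ]; ring
  have hψ₀ : 0 ≤ ψ := by positivity
  have hψ₁ : ψ ≤ π / 2 := by linarith
  have hsin : 0 ≤ sin ψ := sin_nonneg_of_nonneg_of_le_pi hψ₀ (by linarith [pi_pos])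
  have htan : ψ * cos ψ ≤ sin ψ := by
    rcases hψ₁.lt_or_eq with hlt | heq
    · have hpos : 0 < cos ψ := cos_pos_of_mem_Ioo ⟨by linarith, hlt⟩
      simpa only [tan_eq_sin_div_cos, le_div_iff₀ hpos] using le_tan hψ₀ hlt
    · simp [heq]
  have hsin_abs : |sin x| = 2 * sin ψ * cos ψ := by
    rw [abs_sin_eq_sin_abs_of_abs_le_pi hx, hx2, sin_two_mul]
  have hcos_abs : cos x = 1 - 2 * sin ψ ^ 2 := by
    rw [← cos_abs, hx2, cos_two_mul, cos_sq']
    ring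
  calc |sin x| * |x| = 4 * sin ψ * (ψ * cos ψ) := by rw [hsin_abs, hx2]; ring
    _ ≤ 4 * sin ψ * sin ψ := by gcongr
    _ = 2 * (1 - cos x) := by rw [hcos_abs]; ring

namespace IsFourthHarmonic

variable {h h' : ℝ → ℝ} {θ : ℝ}

theorem const (c : ℝ) : IsFourthHarmonic fun _ => c :=
  ⟨c, 0, 0, by simp⟩

theorem add (hh : IsFourthHarmonic h) (hh' : IsFourthHarmonic h') :
    IsFourthHarmonic fun t => h t + h' t := by
  obtain ⟨A, α, β, hh⟩ := hh
  obtain ⟨A', α', β', hh'⟩ := hh'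
  exact ⟨A + A', α + α', β + β', fun t => by simp only [hh, hh']; ring⟩

theorem sum {ι : Type*} {s : Finset ι} {h : ι → ℝ → ℝ} (hh : ∀ i ∈ s, IsFourthHarmonic (h i)) :
    IsFourthHarmonic fun t => ∑ i ∈ s, h i t := by
  classical
  induction s using Finset.induction_on with
  | empty => simpa using const 0
  | insert i s hi ih =>
    simp only [Finset.sum_insert hi]
    exact (hh i (s.mem_insert_self i)).add (ih fun l hl => hh l (Finset.mem_insert_of_mem hl))

theorem exists_eq_of_forall_le (hh : IsFourthHarmonic h) (hmax : ∀ t, h t ≤ h θ) :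
    ∃ A r : ℝ, 0 ≤ r ∧ ∀ t, h t = A + r * cos (4 * (t - θ)) := by
  obtain ⟨A, α, β, hh⟩ := hh
  have hder : HasDerivAt h (α * (-sin (4 * θ) * 4) + β * (cos (4 * θ) * 4)) θ := by
    have h4 : HasDerivAt (fun t : ℝ => 4 * t) 4 θ := by
      simpa using (hasDerivAt_id θ).const_mul 4
    rw [funext hh]
    exact ((h4.cos.const_mul α).const_add A).add (h4.sin.const_mul β)
  have hcrit : β * cos (4 * θ) = α * sin (4 * θ) := by
    have hlocal : IsLocalMax h θ := Eventually.of_forall hmax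
    linarith [hlocal.hasDerivAt_eq_zero hder]
  have hform (t : ℝ) :
      h t = A + (α * cos (4 * θ) + β * sin (4 * θ)) * cos (4 * (t - θ)) := by
    rw [hh, mul_sub, cos_sub]
    linear_combination (-α * cos (4 * t) - β * sin (4 * t)) * sin_sq_add_cos_sq (4 * θ) +
      (sin (4 * t) * cos (4 * θ) - cos (4 * t) * sin (4 * θ)) * hcrit
  refine ⟨A, _, ?_, hform⟩
  have hopp := hmax (θ + π / 4)
  rw [hform, hform, show 4 * (θ + π / 4 - θ) = π by ring, cos_pi, sub_self, mul_zero,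
    cos_zero] at hopp
  linarith

theorem deriv_zero {A r : ℝ} (hh : ∀ t, h t = A + r * cos (4 * (t - θ))) :
    deriv h 0 = 4 * r * sin (4 * θ) := by
  have h4 : HasDerivAt (fun t : ℝ => 4 * (t - θ)) 4 0 := by
    simpa using ((hasDerivAt_id (0 : ℝ)).sub_const θ).const_mul 4
  rw [funext hh, ((h4.cos.const_mul r).const_add A).deriv]
  simp
  ring

theorem abs_deriv_mul_abs_le (hh : IsFourthHarmonic h) (hθ : IsMinAbsMaximizer h θ) :
    |deriv h 0| * |θ| ≤ 2 * (h θ - h 0) := by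
  obtain ⟨A, r, hr, hform⟩ := hh.exists_eq_of_forall_le hθ.1
  have hper : Function.Periodic h (π / 2) := fun t => by
    rw [hform, hform, show 4 * (t + π / 2 - θ) = 4 * (t - θ) + 2 * π by ring, cos_add_two_pi]
  have hle : |4 * θ| ≤ π := by
    rw [abs_mul, abs_of_pos (by norm_num : (0 : ℝ) < 4)]
    linarith [hθ.abs_le_half_of_periodic hper (by positivity)]
  calc |deriv h 0| * |θ| = r * (|sin (4 * θ)| * |4 * θ|) := by
        rw [deriv_zero hform, abs_mul, abs_mul, abs_mul, abs_of_nonneg hr]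
        norm_num
        ring
    _ ≤ r * (2 * (1 - cos (4 * θ))) := mul_le_mul_of_nonneg_left (abs_sin_mul_abs_le hle) hr
    _ = 2 * (h θ - h 0) := by rw [hform θ, hform 0]; simp; ring

theorem abs_deriv_le (hh : IsFourthHarmonic h) (hmax : ∀ t, h t ≤ h θ) :
    |deriv h 0| ≤ 8 * (h θ - h (θ + π / 4)) * |θ| := by
  obtain ⟨A, r, hr, hform⟩ := hh.exists_eq_of_forall_le hmax
  have hdrop : h θ - h (θ + π / 4) = 2 * r := by
    rw [hform, hform, show 4 * (θ + π / 4 - θ) = π by ring]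
    simp
    ring
  calc |deriv h 0| = 4 * r * |sin (4 * θ)| := by
        rw [deriv_zero hform, abs_mul, abs_of_nonneg (by positivity)]
    _ ≤ 4 * r * |4 * θ| := mul_le_mul_of_nonneg_left abs_sin_le_abs (by positivity)
    _ = 8 * (h θ - h (θ + π / 4)) * |θ| := by rw [hdrop, abs_mul]; norm_num; ring

theorem sq_add_sq_of_cubic (a b c d : ℝ) :
    IsFourthHarmonic fun t =>
      (a * cos t ^ 3 + b * cos t ^ 2 * sin t + c * cos t * sin t ^ 2 + d * sin t ^ 3) ^ 2 +
      (-a * sin t ^ 3 + b * sin t ^ 2 * cos t - c * sin t * cos t ^ 2 + d * cos t ^ 3) ^ 2 := by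
  refine ⟨5 / 8 * (a ^ 2 + d ^ 2) + 1 / 8 * (b ^ 2 + c ^ 2) + 1 / 4 * (a * c + b * d),
    3 / 8 * (a ^ 2 + d ^ 2) - 1 / 8 * (b ^ 2 + c ^ 2) - 1 / 4 * (a * c + b * d),
    (a * b - c * d) / 2, fun t => ?_⟩
  have hsq := sin_sq_add_cos_sq t
  have hcos4 : cos (4 * t) = 1 - 8 * cos t ^ 2 * sin t ^ 2 := by
    rw [show 4 * t = 2 * (2 * t) by ring, cos_two_mul, cos_two_mul, sin_sq]
    ring
  have hsin4 : sin (4 * t) = 4 * sin t * cos t * (cos t ^ 2 - sin t ^ 2) := by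
    rw [show 4 * t = 2 * (2 * t) by ring, sin_two_mul, sin_two_mul, cos_two_mul']
    ring
  have hdeg6 : cos t ^ 6 + sin t ^ 6 = 1 - 3 * cos t ^ 2 * sin t ^ 2 := by
    have hcube : (sin t ^ 2 + cos t ^ 2) ^ 3 = 1 := by rw [hsq, one_pow]
    linear_combination hcube - 3 * cos t ^ 2 * sin t ^ 2 * hsq
  rw [hcos4, hsin4]
  linear_combination (a ^ 2 + d ^ 2) * hdeg6 +
    (b ^ 2 + c ^ 2 + 2 * a * c + 2 * b * d) * (cos t ^ 2 * sin t ^ 2) * hsq +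
    2 * (a * b - c * d) * (cos t * sin t * (cos t ^ 2 - sin t ^ 2)) * hsq

end IsFourthHarmonic

end FourthHarmonic

section GivensRotations

variable {n : ℕ} {Q X Y : Matrix (Fin n) (Fin n) ℝ} {i j : Fin n}

theorem abs_entry_le_one (hQ : Qᵀ * Q = 1) (u v : Fin n) : |Q u v| ≤ 1 :=
  entry_norm_bound_of_unitary (𝕜 := ℝ) ((mem_orthogonalGroup_iff' (Fin n) ℝ).2 hQ) u v

theorem mul_givensR_apply (Q : Matrix (Fin n) (Fin n) ℝ) (hij : i ≠ j) (t : ℝ) (u v : Fin n) :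
    (Q * givensR n i j t) u v =
      if v = i then Real.cos t * Q u i + Real.sin t * Q u j
      else if v = j then -Real.sin t * Q u i + Real.cos t * Q u j else Q u v := by
  rw [mul_apply]
  split_ifs with hi hj
  · rw [Fintype.sum_eq_add i j hij fun l hl => by simp [givensR, hi, hl.1, hl.2, hij]]
    simp [givensR, hi, hij, hij.symm, mul_comm]
  · rw [Fintype.sum_eq_add i j hij fun l hl => by simp [givensR, hj, hl.1, hl.2, hij.symm]]
    simp [givensR, hj, hij, hij.symm, mul_comm]
  · rw [Fintype.sum_eq_single v fun l hl => by simp [givensR, hi, hj, hl]]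
    simp [givensR, hi, hj]

theorem mul_givensR_zero (Q : Matrix (Fin n) (Fin n) ℝ) (hij : i ≠ j) :
    Q * givensR n i j 0 = Q := by
  ext u v
  rw [mul_givensR_apply Q hij]
  split_ifs with hi hj <;> simp [*]

theorem givensR_transpose_mul_self (hij : i ≠ j) (t : ℝ) :
    (givensR n i j t)ᵀ * givensR n i j t = 1 := by
  ext u v
  rw [mul_givensR_apply _ hij]
  simp only [transpose_apply, givensR, one_apply]
  grind [Real.sin_sq_add_cos_sq]

theorem abs_cos_sub_one_le (t : ℝ) : |Real.cos t - 1| ≤ |t| := by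
  simpa [Real.dist_eq] using Real.lipschitzWith_cos.dist_le_mul t 0

theorem abs_mul_givensR_sub_le (hQ : Qᵀ * Q = 1) (hij : i ≠ j) (t : ℝ) (u v : Fin n) :
    |(Q * givensR n i j t) u v - Q u v| ≤ 2 * |t| := by
  have hcos : |Real.cos t - 1| ≤ |t| := abs_cos_sub_one_le t
  have hcomb {x y p q : ℝ} (hx : |x| ≤ |t|) (hy : |y| ≤ |t|) (hp : |p| ≤ 1) (hq : |q| ≤ 1) :
      |x * p + y * q| ≤ 2 * |t| := calc
    |x * p + y * q| ≤ |x| * |p| + |y| * |q| := by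
      simpa only [abs_mul] using abs_add_le (x * p) (y * q)
    _ ≤ |t| * 1 + |t| * 1 := by gcongr
    _ = 2 * |t| := by ring
  have hentry := abs_entry_le_one hQ
  rw [mul_givensR_apply Q hij]
  split_ifs with hi hj
  · rw [hi, show Real.cos t * Q u i + Real.sin t * Q u j - Q u i =
      (Real.cos t - 1) * Q u i + Real.sin t * Q u j by ring]
    exact hcomb hcos Real.abs_sin_le_abs (hentry u i) (hentry u j)
  · rw [hj, show -Real.sin t * Q u i + Real.cos t * Q u j - Q u j =
      (-Real.sin t) * Q u i + (Real.cos t - 1) * Q u j by ring]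
    exact hcomb ((abs_neg _).trans_le Real.abs_sin_le_abs) hcos (hentry u i) (hentry u j)
  · simp

end GivensRotations

section ProjectedGradient

variable {n : ℕ}

theorem sum_sum_sq_eq_zero {M : Matrix (Fin n) (Fin n) ℝ} :
    ∑ u, ∑ v, M u v ^ 2 = 0 ↔ M = 0 := by
  rw [Finset.sum_eq_zero_iff_of_nonneg (by intros; positivity)]
  simp [Finset.sum_eq_zero_iff_of_nonneg, sq_nonneg, ← ext_iff]

theorem frobR_nonneg (M : Matrix (Fin n) (Fin n) ℝ) : 0 ≤ frobR M :=
  Real.sqrt_nonneg _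

theorem frobR_eq_zero {M : Matrix (Fin n) (Fin n) ℝ} : frobR M = 0 ↔ M = 0 := by
  rw [frobR, Real.sqrt_eq_zero (by positivity), sum_sum_sq_eq_zero]

theorem continuous_frobR : Continuous (frobR : Matrix (Fin n) (Fin n) ℝ → ℝ) := by
  unfold frobR
  fun_prop

theorem abs_entry_le_frobR (M : Matrix (Fin n) (Fin n) ℝ) (u v : Fin n) : |M u v| ≤ frobR M :=
  Real.abs_le_sqrt <| calc
    M u v ^ 2 ≤ ∑ w, M u w ^ 2 :=
      Finset.single_le_sum (f := fun w => M u w ^ 2) (fun _ _ => sq_nonneg _) (Finset.mem_univ v)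
    _ ≤ ∑ l, ∑ w, M l w ^ 2 :=
      Finset.single_le_sum (f := fun l => ∑ w, M l w ^ 2)
        (fun _ _ => Finset.sum_nonneg fun _ _ => sq_nonneg _) (Finset.mem_univ u)

theorem trace_transpose_mul (M N : Matrix (Fin n) (Fin n) ℝ) :
    (Mᵀ * N).trace = ∑ k : Fin n × Fin n, M k.1 k.2 * N k.1 k.2 := by
  simp only [trace, diag_apply, mul_apply, transpose_apply, Fintype.sum_prod_type]
  exact Finset.sum_comm

theorem abs_trace_transpose_mul_le {M : Matrix (Fin n) (Fin n) ℝ} {C : ℝ}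
    (hM : ∀ u v, |M u v| ≤ C) (N : Matrix (Fin n) (Fin n) ℝ) :
    |(Mᵀ * N).trace| ≤ C * ∑ k : Fin n × Fin n, |N k.1 k.2| := by
  rw [trace_transpose_mul, Finset.mul_sum]
  refine (Finset.abs_sum_le_sum_abs _ _).trans (Finset.sum_le_sum fun k _ => ?_)
  rw [abs_mul]
  exact mul_le_mul_of_nonneg_right (hM k.1 k.2) (abs_nonneg _)

theorem abs_mul_apply_le {M : Matrix (Fin n) (Fin n) ℝ} {C : ℝ} (hM : ∀ u v, |M u v| ≤ C)
    (N : Matrix (Fin n) (Fin n) ℝ) (u v : Fin n) :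
    |(N * M) u v| ≤ (∑ k : Fin n × Fin n, |N k.1 k.2|) * C := by
  have hrow : ∑ w, |N u w| ≤ ∑ k : Fin n × Fin n, |N k.1 k.2| := by
    rw [Fintype.sum_prod_type]
    exact Finset.single_le_sum (f := fun l => ∑ w, |N l w|)
      (fun _ _ => Finset.sum_nonneg fun _ _ => abs_nonneg _) (Finset.mem_univ u)
  calc |(N * M) u v| ≤ ∑ w, |N u w * M w v| := by
        rw [mul_apply]; exact Finset.abs_sum_le_sum_abs _ _
    _ ≤ ∑ w, |N u w| * C := Finset.sum_le_sum fun w _ => by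
        rw [abs_mul]; exact mul_le_mul_of_nonneg_left (hM w v) (abs_nonneg _)
    _ ≤ _ := by
        rw [← Finset.sum_mul]
        exact mul_le_mul_of_nonneg_right hrow ((abs_nonneg _).trans (hM u v))

/- For `Δ = Y - X`, tangency fails only to second order: `XᵀΔ + ΔᵀX = -ΔᵀΔ`. -/
theorem trace_transpose_mul_sub_eq (g : Matrix (Fin n) (Fin n) ℝ → Matrix (Fin n) (Fin n) ℝ)
    {X Y : Matrix (Fin n) (Fin n) ℝ} (hX : Xᵀ * X = 1) (hY : Yᵀ * Y = 1) :
    ((g X)ᵀ * (Y - X)).trace = ((projGradR g X)ᵀ * (Y - X)).trace -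
      1 / 2 * (((Y - X) * (Xᵀ * g X))ᵀ * (Y - X)).trace := by
  have hX' : X * Xᵀ = 1 := mul_eq_one_comm.1 hX
  generalize hΔ : Y - X = Δ
  obtain rfl : Y = X + Δ := by rw [← hΔ]; abel
  have htangent : Xᵀ * Δ = -(Δᵀ * X) - Δᵀ * Δ := by
    simp only [transpose_add, add_mul, mul_add, hX] at hY
    linear_combination (norm := abel) hY
  have hproj : (projGradR g X)ᵀ * Δ = (1 / 2 : ℝ) • ((g X)ᵀ * Δ - Xᵀ * g X * (Xᵀ * Δ)) := by
    simp only [projGradR, transpose_mul, transpose_smul, transpose_sub, transpose_transpose,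
      smul_mul, sub_mul, Matrix.mul_assoc]
    rw [← Matrix.mul_assoc X, hX', Matrix.one_mul]
  have hfirst : (Xᵀ * g X * (Δᵀ * X)).trace = ((g X)ᵀ * Δ).trace := by
    rw [trace_mul_comm, Matrix.mul_assoc, ← Matrix.mul_assoc X, hX', Matrix.one_mul,
      ← trace_transpose, transpose_mul, transpose_transpose]
  have hsecond : (Xᵀ * g X * (Δᵀ * Δ)).trace = ((Δ * (Xᵀ * g X))ᵀ * Δ).trace := by
    rw [← trace_transpose, trace_mul_comm]
    simp only [transpose_mul, transpose_transpose, Matrix.mul_assoc]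
    rw [trace_mul_comm]
    simp only [Matrix.mul_assoc]
  rw [hproj, htangent, mul_sub, mul_neg, trace_smul, trace_sub, trace_sub, trace_neg, hfirst,
    hsecond, smul_eq_mul]
  ring

end ProjectedGradient

section MatrixPolynomials

variable {n : ℕ}

/-- The matrix with entries `x`: the identification of `ℝ^{n×n}` with the affine space with
coordinates indexed by `Fin n × Fin n`, whose inverse is `Function.uncurry`. -/
def matrixOf (x : Fin n × Fin n → ℝ) : Matrix (Fin n) (Fin n) ℝ :=
  of (Function.curry x)

/-- A function of a square matrix that is a polynomial in the entries. -/
def IsMatrixPolynomial (a : Matrix (Fin n) (Fin n) ℝ → ℝ) : Prop :=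
  IsPolynomialFun fun x => a (matrixOf x)

namespace IsMatrixPolynomial

variable {f : Matrix (Fin n) (Fin n) ℝ → ℝ}
  {F G : Matrix (Fin n) (Fin n) ℝ → Matrix (Fin n) (Fin n) ℝ}

theorem entry (u v : Fin n) : IsMatrixPolynomial fun Q : Matrix (Fin n) (Fin n) ℝ => Q u v :=
  IsPolynomialFun.coord (u, v)

theorem continuous (hf : IsMatrixPolynomial f) : Continuous f :=
  (IsPolynomialFun.continuous hf).comp (g := fun x => f (matrixOf x))
    (f := fun Q : Matrix (Fin n) (Fin n) ℝ => Function.uncurry Q)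
    (continuous_pi fun k => continuous_id.matrix_elem k.1 k.2)

theorem mul_apply (hF : ∀ u v, IsMatrixPolynomial fun Q => F Q u v)
    (hG : ∀ u v, IsMatrixPolynomial fun Q => G Q u v) (u v : Fin n) :
    IsMatrixPolynomial fun Q => (F Q * G Q) u v := by
  simp only [Matrix.mul_apply]
  exact IsPolynomialFun.sum fun w => IsPolynomialFun.mul (hF u w) (hG w v)

theorem sum_sum_sq (hF : ∀ u v, IsMatrixPolynomial fun Q => F Q u v) :
    IsMatrixPolynomial fun Q => ∑ u, ∑ v, F Q u v ^ 2 :=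
  IsPolynomialFun.sum fun u => IsPolynomialFun.sum fun v => IsPolynomialFun.pow (hF u v) 2

theorem exists_abs_le (hf : IsMatrixPolynomial f) :
    ∃ C, 0 ≤ C ∧ ∀ Q, Qᵀ * Q = 1 → |f Q| ≤ C := by
  obtain ⟨C, hC, hfC⟩ := IsPolynomialFun.exists_abs_le_of_box hf 1
  exact ⟨C, hC, fun Q hQ => hfC (Function.uncurry Q) fun k => abs_entry_le_one hQ k.1 k.2⟩

theorem transpose_mul_apply (hG : ∀ u v, IsMatrixPolynomial fun Q => G Q u v) (u v : Fin n) :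
    IsMatrixPolynomial fun Q => (Qᵀ * G Q) u v :=
  mul_apply (F := transpose) (fun u v => entry v u) hG u v

theorem trace_gradient_mul_eq {d : Fin n × Fin n → (Fin n × Fin n → ℝ) → ℝ}
    (hd : ∀ x h, HasDerivAt (fun t : ℝ => f (matrixOf (x + t • h))) (∑ k, d k x * h k) 0)
    (hG : IsGradR f G) (X H : Matrix (Fin n) (Fin n) ℝ) :
    ((G X)ᵀ * H).trace = ∑ k, d k (Function.uncurry X) * H k.1 k.2 := by
  rw [trace_transpose_mul, Fintype.sum_prod_type]
  exact (hG X H).unique (hd (Function.uncurry X) (Function.uncurry H))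

theorem gradient_apply (hf : IsMatrixPolynomial f) (hG : IsGradR f G) (u v : Fin n) :
    IsMatrixPolynomial fun Q => G Q u v := by
  obtain ⟨d, hd, hder, -⟩ := IsPolynomialFun.exists_gradient hf
  have hentry (X : Matrix (Fin n) (Fin n) ℝ) : G X u v = d (u, v) (Function.uncurry X) := by
    have htrace := trace_gradient_mul_eq hder hG X (single u v 1)
    rw [trace_transpose_mul] at htrace
    simpa [single_apply, Fintype.sum_prod_type, ite_and] using htrace
  simp only [hentry]
  exact hd (u, v)

theorem exists_abs_sub_sub_trace_le (hf : IsMatrixPolynomial f) (hG : IsGradR f G) :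
    ∃ C, 0 ≤ C ∧ ∀ X Y, Xᵀ * X = 1 → Yᵀ * Y = 1 →
      |f Y - f X - ((G X)ᵀ * (Y - X)).trace| ≤
        C * (∑ k : Fin n × Fin n, |(Y - X) k.1 k.2|) ^ 2 := by
  obtain ⟨d, -, hder, htaylor⟩ := IsPolynomialFun.exists_gradient hf
  obtain ⟨C, hC, hbound⟩ := htaylor 1
  refine ⟨C, hC, fun X Y hX hY => ?_⟩
  rw [trace_gradient_mul_eq hder hG]
  exact hbound (Function.uncurry X) (Function.uncurry Y)
    (fun k => abs_entry_le_one hX k.1 k.2) fun k => abs_entry_le_one hY k.1 k.2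

theorem exists_abs_sub_le_frobR_mul_add (hf : IsMatrixPolynomial f) (hG : IsGradR f G) :
    ∃ K, 0 ≤ K ∧ ∀ X Y, Xᵀ * X = 1 → Yᵀ * Y = 1 →
      |f Y - f X| ≤ frobR (projGradR G X) * (∑ k : Fin n × Fin n, |(Y - X) k.1 k.2|) +
        K * (∑ k : Fin n × Fin n, |(Y - X) k.1 k.2|) ^ 2 := by
  obtain ⟨C, hC, htaylor⟩ := hf.exists_abs_sub_sub_trace_le hG
  choose D hD hGD using fun u v => (transpose_mul_apply (hf.gradient_apply hG) u v).exists_abs_le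
  set D' := ∑ u, ∑ v, D u v
  have hDle (u v : Fin n) : D u v ≤ D' :=
    (Finset.single_le_sum (fun w _ => hD u w) (Finset.mem_univ v)).trans
      (Finset.single_le_sum (f := fun l => ∑ w, D l w)
        (fun l _ => Finset.sum_nonneg fun w _ => hD l w) (Finset.mem_univ u))
  have hD' : 0 ≤ D' := Finset.sum_nonneg fun u _ => Finset.sum_nonneg fun v _ => hD u v
  refine ⟨C + 1 / 2 * D', by positivity, fun X Y hX hY => ?_⟩
  have hremainder := htaylor X Y hX hY
  rw [trace_transpose_mul_sub_eq G hX hY] at hremainder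
  have hfirst := abs_trace_transpose_mul_le (abs_entry_le_frobR (projGradR G X)) (Y - X)
  have hsecond := abs_trace_transpose_mul_le
    (abs_mul_apply_le (fun u v => (hGD u v X hX).trans (hDle u v)) (Y - X)) (Y - X)
  rw [abs_le] at *
  constructor <;> linarith [hremainder.1, hremainder.2, hfirst.1, hfirst.2, hsecond.1, hsecond.2]

theorem projGradR_apply (hG : ∀ u v, IsMatrixPolynomial fun Q => G Q u v) (u v : Fin n) :
    IsMatrixPolynomial fun Q => projGradR G Q u v := by
  have hΛ := transpose_mul_apply hG
  exact mul_apply (F := id) (G := fun Q => (1 / 2 : ℝ) • (Qᵀ * G Q - (Qᵀ * G Q)ᵀ)) entry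
    (fun u v => IsPolynomialFun.mul (.const (1 / 2)) (IsPolynomialFun.sub (hΛ u v) (hΛ v u))) u v

theorem continuous_projGradR (hG : ∀ u v, IsMatrixPolynomial fun Q => G Q u v) :
    Continuous (projGradR G) :=
  continuous_matrix fun u v => (projGradR_apply hG u v).continuous

theorem exists_isDesingularizing (hf : IsMatrixPolynomial f) (hG : IsGradR f G) (c : ℝ) :
    ∃ a < c, ∃ Ψ, IsDesingularizing f (fun Q => frobR (projGradR G Q)) {Q | Qᵀ * Q = 1}
      (Ioo a c) Ψ := by
  obtain ⟨K, hK, hlip⟩ := hf.exists_abs_sub_le_frobR_mul_add hG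
  have hdefect : IsMatrixPolynomial fun Q : Matrix (Fin n) (Fin n) ℝ =>
      ∑ u, ∑ v, (Qᵀ * Q - 1) u v ^ 2 :=
    sum_sum_sq fun u v => IsPolynomialFun.sub (transpose_mul_apply entry u v) (.const _)
  have hiff (x : Fin n × Fin n → ℝ) :
      ∑ u, ∑ v, ((matrixOf x)ᵀ * matrixOf x - 1) u v ^ 2 = 0 ↔ (matrixOf x)ᵀ * matrixOf x = 1 :=
    sum_sum_sq_eq_zero.trans sub_eq_zero
  have hV : IsSemialgebraic fun x : Fin n × Fin n → ℝ => (matrixOf x)ᵀ * matrixOf x = 1 :=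
    (IsSemialgebraic.eq hdefect (.const 0)).congr hiff
  have hcompact : IsCompact {x : Fin n × Fin n → ℝ | (matrixOf x)ᵀ * matrixOf x = 1} := by
    have hclosed : IsClosed {x : Fin n × Fin n → ℝ | (matrixOf x)ᵀ * matrixOf x = 1} := by
      simpa only [hiff] using
        isClosed_eq (IsPolynomialFun.continuous hdefect) (continuous_const (y := (0 : ℝ)))
    exact (isCompact_univ_pi fun _ => isCompact_Icc).of_isClosed_subset hclosed
      fun x hx k _ => abs_le.1 (abs_entry_le_one hx k.1 k.2)
  obtain ⟨a, hac, Ψ, hmono, hbdd, hkl⟩ := JacobiG.exists_isDesingularizing hV hcompact hf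
    (sum_sum_sq (projGradR_apply (hf.gradient_apply hG))) hK (fun x hx y hy => hlip _ _ hx hy) c
  exact ⟨a, hac, Ψ, hmono, hbdd, fun Q hQ => hkl (Function.uncurry Q) hQ⟩

end IsMatrixPolynomial

end MatrixPolynomials

section CubicCost

variable {n : ℕ}

theorem exists_sum_eq_binary_cubic (A : Fin n → Fin n → Fin n → ℝ) (u v : Fin n → ℝ) :
    ∃ p q r w : ℝ, ∀ x y : ℝ,
      ∑ a, ∑ b, ∑ c, A a b c * (x * u a + y * v a) * (x * u b + y * v b) * (x * u c + y * v c) =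
        p * x ^ 3 + q * x ^ 2 * y + r * x * y ^ 2 + w * y ^ 3 := by
  refine ⟨∑ a, ∑ b, ∑ c, A a b c * u a * u b * u c,
    ∑ a, ∑ b, ∑ c, A a b c * (u a * u b * v c + u a * v b * u c + v a * u b * u c),
    ∑ a, ∑ b, ∑ c, A a b c * (u a * v b * v c + v a * u b * v c + v a * v b * u c),
    ∑ a, ∑ b, ∑ c, A a b c * v a * v b * v c, fun x y => ?_⟩
  simp only [Finset.sum_mul, ← Finset.sum_add_distrib]
  refine Finset.sum_congr rfl fun a _ => Finset.sum_congr rfl fun b _ =>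
    Finset.sum_congr rfl fun c _ => ?_
  ring

/-- The diagonalization cost `∑ₖ W(Q)ₖₖₖ²` of a single third-order tensor, where `W(Q)` is the
tensor `A` expressed in the columns of `Q`. -/
def diagonalCost (A : Fin n → Fin n → Fin n → ℝ) (Q : Matrix (Fin n) (Fin n) ℝ) : ℝ :=
  ∑ k, (∑ a, ∑ b, ∑ c, A a b c * Q a k * Q b k * Q c k) ^ 2

theorem isMatrixPolynomial_diagonalCost (A : Fin n → Fin n → Fin n → ℝ) :
    IsMatrixPolynomial (diagonalCost A) :=
  have entry (u v : Fin n) := IsMatrixPolynomial.entry u v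
  IsPolynomialFun.sum fun k => IsPolynomialFun.pow (IsPolynomialFun.sum fun a =>
    IsPolynomialFun.sum fun b => IsPolynomialFun.sum fun c =>
      IsPolynomialFun.mul (IsPolynomialFun.mul (IsPolynomialFun.mul (.const (A a b c)) (entry a k))
        (entry b k)) (entry c k)) 2

theorem isFourthHarmonic_diagonalCost (A : Fin n → Fin n → Fin n → ℝ)
    (Q : Matrix (Fin n) (Fin n) ℝ) {i j : Fin n} (hij : i ≠ j) :
    IsFourthHarmonic fun t => diagonalCost A (Q * givensR n i j t) := by
  obtain ⟨p, q, r, w, hcubic⟩ := exists_sum_eq_binary_cubic A (fun a => Q a i) (fun a => Q a j)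
  have hsplit (t : ℝ) : diagonalCost A (Q * givensR n i j t) =
      (p * Real.cos t ^ 3 + q * Real.cos t ^ 2 * Real.sin t + r * Real.cos t * Real.sin t ^ 2 +
        w * Real.sin t ^ 3) ^ 2 +
      (-p * Real.sin t ^ 3 + q * Real.sin t ^ 2 * Real.cos t - r * Real.sin t * Real.cos t ^ 2 +
        w * Real.cos t ^ 3) ^ 2 +
      ∑ k ∈ (Finset.univ.erase i).erase j,
        (∑ a, ∑ b, ∑ c, A a b c * Q a k * Q b k * Q c k) ^ 2 := by
    rw [diagonalCost, ← Finset.add_sum_erase _ _ (Finset.mem_univ i),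
      ← Finset.add_sum_erase _ _ (Finset.mem_erase.2 ⟨hij.symm, Finset.mem_univ j⟩), ← add_assoc]
    simp only [mul_givensR_apply Q hij, if_true, if_neg hij.symm]
    congr 1
    · rw [hcubic, hcubic]
      ring
    · refine Finset.sum_congr rfl fun k hk => ?_
      obtain ⟨hkj, hki, -⟩ := by simpa only [Finset.mem_erase] using hk
      simp only [if_neg hkj, if_neg hki]
  rw [funext hsplit]
  exact (IsFourthHarmonic.sq_add_sq_of_cubic p q r w).add (.const _)

end CubicCost

section JacobiSequences

theorem summable_of_le_sub {u b : ℕ → ℝ} {B : ℝ} (hu : ∀ k, 0 ≤ u k)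
    (hle : ∀ k, u k ≤ b (k + 1) - b k) (hB : ∀ k, b k ≤ B) : Summable u := by
  refine summable_of_sum_range_le (c := B - b 0) hu fun N => ?_
  calc ∑ k ∈ Finset.range N, u k ≤ ∑ k ∈ Finset.range N, (b (k + 1) - b k) :=
        Finset.sum_le_sum fun k _ => hle k
    _ = b N - b 0 := Finset.sum_range_sub b N
    _ ≤ B - b 0 := sub_le_sub_right (hB N) _

variable {n : ℕ}

/-- Along every Givens rotation `f` restricts to a fourth harmonic; this is the case for the
diagonalization costs of third-order tensors. -/
def HasFourthHarmonicRotations (f : Matrix (Fin n) (Fin n) ℝ → ℝ) : Prop :=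
  ∀ Q i j, i ≠ j → IsFourthHarmonic fun t => f (Q * givensR n i j t)

/-- The Jacobi-G sequences `Q` of `f` in `O(n)`, with pivot pairs `(i k, j k)` and angles `θ k`;
here `g` is the Euclidean gradient of `f`, and the pivot pairs need not be ordered. -/
structure IsJacobiGSequence (f : Matrix (Fin n) (Fin n) ℝ → ℝ)
    (g : Matrix (Fin n) (Fin n) ℝ → Matrix (Fin n) (Fin n) ℝ) (δ : ℝ)
    (Q : ℕ → Matrix (Fin n) (Fin n) ℝ) (i j : ℕ → Fin n) (θ : ℕ → ℝ) : Prop where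
  zero_orthogonal : (Q 0)ᵀ * Q 0 = 1
  pivot_ne : ∀ k, i k ≠ j k
  succ_eq : ∀ k, Q (k + 1) = Q k * givensR n (i k) (j k) (θ k)
  gradient_le : ∀ k, δ * frobR (projGradR g (Q k)) ≤
    |deriv (fun t => f (Q k * givensR n (i k) (j k) t)) 0|
  isMinAbsMaximizer : ∀ k, IsMinAbsMaximizer (fun t => f (Q k * givensR n (i k) (j k) t)) (θ k)

variable {f : Matrix (Fin n) (Fin n) ℝ → ℝ}
  {g : Matrix (Fin n) (Fin n) ℝ → Matrix (Fin n) (Fin n) ℝ} {δ : ℝ}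
  {Q : ℕ → Matrix (Fin n) (Fin n) ℝ} {i j : ℕ → Fin n} {θ : ℕ → ℝ}

theorem orthogonal_mul_givensR {X : Matrix (Fin n) (Fin n) ℝ} {i j : Fin n} (hX : Xᵀ * X = 1)
    (hij : i ≠ j) (t : ℝ) : (X * givensR n i j t)ᵀ * (X * givensR n i j t) = 1 := by
  rw [transpose_mul, Matrix.mul_assoc, ← Matrix.mul_assoc _ X, hX, Matrix.one_mul,
    givensR_transpose_mul_self hij]

namespace IsJacobiGSequence

theorem orthogonal (hJ : IsJacobiGSequence f g δ Q i j θ) (k : ℕ) : (Q k)ᵀ * Q k = 1 := by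
  induction k with
  | zero => exact hJ.zero_orthogonal
  | succ k ih => rw [hJ.succ_eq, orthogonal_mul_givensR ih (hJ.pivot_ne k)]

theorem monotone (hJ : IsJacobiGSequence f g δ Q i j θ) : Monotone fun k => f (Q k) :=
  monotone_nat_of_le_succ fun k => by
    simpa only [mul_givensR_zero _ (hJ.pivot_ne k), ← hJ.succ_eq] using
      (hJ.isMinAbsMaximizer k).1 0

theorem angle_eq_zero (hJ : IsJacobiGSequence f g δ Q i j θ) {k : ℕ}
    (hle : f (Q (k + 1)) ≤ f (Q k)) : θ k = 0 :=
  (hJ.isMinAbsMaximizer k).eq_zero <| by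
    rwa [mul_givensR_zero _ (hJ.pivot_ne k), ← hJ.succ_eq]

theorem gradient_mul_angle_le (hJ : IsJacobiGSequence f g δ Q i j θ)
    (hf : HasFourthHarmonicRotations f) (k : ℕ) :
    δ * frobR (projGradR g (Q k)) * |θ k| ≤ 2 * (f (Q (k + 1)) - f (Q k)) :=
  calc δ * frobR (projGradR g (Q k)) * |θ k|
      ≤ |deriv (fun t => f (Q k * givensR n (i k) (j k) t)) 0| * |θ k| :=
        mul_le_mul_of_nonneg_right (hJ.gradient_le k) (abs_nonneg _)
    _ ≤ 2 * (f (Q (k + 1)) - f (Q k)) := by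
      simpa only [mul_givensR_zero _ (hJ.pivot_ne k), ← hJ.succ_eq] using
        (hf (Q k) _ _ (hJ.pivot_ne k)).abs_deriv_mul_abs_le (hJ.isMinAbsMaximizer k)

theorem gradient_le_mul_angle (hJ : IsJacobiGSequence f g δ Q i j θ)
    (hf : HasFourthHarmonicRotations f) {C : ℝ} (hC : ∀ X, Xᵀ * X = 1 → |f X| ≤ C) (k : ℕ) :
    δ * frobR (projGradR g (Q k)) ≤ 16 * C * |θ k| := by
  have hbound (t : ℝ) : |f (Q k * givensR n (i k) (j k) t)| ≤ C :=
    hC _ (orthogonal_mul_givensR (hJ.orthogonal k) (hJ.pivot_ne k) t)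
  calc δ * frobR (projGradR g (Q k)) ≤ _ := hJ.gradient_le k
    _ ≤ _ := (hf (Q k) _ _ (hJ.pivot_ne k)).abs_deriv_le (hJ.isMinAbsMaximizer k).1
    _ ≤ 16 * C * |θ k| := by
      refine mul_le_mul_of_nonneg_right ?_ (abs_nonneg _)
      linarith [(abs_le.1 (hbound (θ k))).2, (abs_le.1 (hbound (θ k + Real.pi / 4))).1]

theorem abs_angle_le (hJ : IsJacobiGSequence f g δ Q i j θ) (hf : HasFourthHarmonicRotations f)
    (hδ : 0 < δ) {s : Set ℝ} {Ψ : ℝ → ℝ}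
    (hΨ : IsDesingularizing f (fun X => frobR (projGradR g X)) {X | Xᵀ * X = 1} s Ψ) {k : ℕ}
    (hk : f (Q k) ∈ s) (hk' : f (Q (k + 1)) ∈ s) :
    |θ k| ≤ 2 / δ * (Ψ (f (Q (k + 1))) - Ψ (f (Q k))) := by
  have hincr : f (Q k) ≤ f (Q (k + 1)) := hJ.monotone k.le_succ
  have hkl : f (Q (k + 1)) - f (Q k) ≤
      frobR (projGradR g (Q k)) * (Ψ (f (Q (k + 1))) - Ψ (f (Q k))) :=
    hΨ.2.2 (Q k) (hJ.orthogonal k) hk _ hk' hincr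
  have hΨincr : Ψ (f (Q k)) ≤ Ψ (f (Q (k + 1))) := hΨ.1 hk hk' hincr
  rcases (frobR_nonneg (projGradR g (Q k))).eq_or_lt with hzero | hpos
  · rw [← hzero, zero_mul] at hkl
    rw [hJ.angle_eq_zero (by linarith), abs_zero]
    exact mul_nonneg (by positivity) (sub_nonneg.2 hΨincr)
  · have hgain := hJ.gradient_mul_angle_le hf k
    rw [div_mul_eq_mul_div, le_div_iff₀ hδ]
    refine le_of_mul_le_mul_left ?_ hpos
    linarith

theorem summable_abs_angle (hJ : IsJacobiGSequence f g δ Q i j θ) (hf : IsMatrixPolynomial f)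
    (hfour : HasFourthHarmonicRotations f) (hg : IsGradR f g) (hδ : 0 < δ) :
    Summable fun k => |θ k| := by
  obtain ⟨C, -, hC⟩ := hf.exists_abs_le
  have hbdd : BddAbove (range fun k => f (Q k)) :=
    ⟨C, forall_mem_range.2 fun k => (le_abs_self _).trans (hC _ (hJ.orthogonal k))⟩
  set c := ⨆ k, f (Q k)
  have hle (k : ℕ) : f (Q k) ≤ c := le_ciSup hbdd k
  by_cases hattained : ∃ m, f (Q m) = c
  · obtain ⟨m, hm⟩ := hattained
    refine summable_of_ne_finset_zero (s := Finset.range m) fun k hk => ?_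
    have hmk : f (Q m) ≤ f (Q k) := hJ.monotone (by simpa using hk)
    rw [hJ.angle_eq_zero ((hle _).trans (hm.symm.trans_le hmk)), abs_zero]
  · obtain ⟨a, hac, Ψ, hΨ⟩ := hf.exists_isDesingularizing hg c
    obtain ⟨m, hm⟩ : ∃ m, a < f (Q m) := exists_lt_of_lt_ciSup hac
    have hmem (k : ℕ) : f (Q (k + m)) ∈ Ioo a c :=
      ⟨hm.trans_le (hJ.monotone (Nat.le_add_left m k)),
        (hle _).lt_of_ne fun heq => hattained ⟨_, heq⟩⟩
    obtain ⟨B, hB⟩ := hΨ.2.1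
    rw [← summable_nat_add_iff m]
    refine summable_of_le_sub (b := fun k => 2 / δ * Ψ (f (Q (k + m)))) (B := 2 / δ * B)
      (fun k => abs_nonneg _) (fun k => ?_) fun k => ?_
    · rw [← mul_sub, Nat.add_right_comm]
      exact hJ.abs_angle_le hfour hδ hΨ (hmem k) (Nat.add_right_comm k 1 m ▸ hmem (k + 1))
    · exact mul_le_mul_of_nonneg_left (hB (mem_image_of_mem Ψ (hmem k))) (by positivity)

theorem exists_tendsto (hJ : IsJacobiGSequence f g δ Q i j θ) (hθ : Summable fun k => |θ k|) :
    ∃ Qs, Tendsto Q atTop (𝓝 Qs) := by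
  have hentry (u v : Fin n) : ∃ q, Tendsto (fun k => Q k u v) atTop (𝓝 q) := by
    refine cauchySeq_tendsto_of_complete <|
      cauchySeq_of_dist_le_of_summable (fun k => 2 * |θ k|) (fun k => ?_) (hθ.mul_left 2)
    rw [dist_comm, Real.dist_eq, hJ.succ_eq]
    exact abs_mul_givensR_sub_le (hJ.orthogonal k) (hJ.pivot_ne k) _ u v
  choose Qs hQs using hentry
  exact ⟨of Qs, tendsto_pi_nhds.2 fun u => tendsto_pi_nhds.2 fun v => hQs u v⟩

theorem tendsto_frobR_projGradR (hJ : IsJacobiGSequence f g δ Q i j θ)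
    (hf : IsMatrixPolynomial f) (hfour : HasFourthHarmonicRotations f) (hδ : 0 < δ)
    (hθ : Summable fun k => |θ k|) :
    Tendsto (fun k => frobR (projGradR g (Q k))) atTop (𝓝 0) := by
  obtain ⟨C, -, hC⟩ := hf.exists_abs_le
  refine squeeze_zero (fun k => frobR_nonneg _) (fun k => ?_)
    (by simpa using hθ.tendsto_atTop_zero.const_mul (16 * C / δ))
  rw [div_mul_eq_mul_div, le_div_iff₀ hδ, mul_comm]
  exact hJ.gradient_le_mul_angle hfour hC k

end IsJacobiGSequence

end JacobiSequences

end JacobiG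

open JacobiG in
theorem jacobiG_global_convergence_order3_general {n : ℕ} {f : Matrix (Fin n) (Fin n) ℝ → ℝ}
    (hf : IsMatrixPolynomial f) (hfour : HasFourthHarmonicRotations f)
    {g : Matrix (Fin n) (Fin n) ℝ → Matrix (Fin n) (Fin n) ℝ} (hg : IsGradR f g)
    {δ : ℝ} (hδ : 0 < δ) {Q : ℕ → Matrix (Fin n) (Fin n) ℝ} {i j : ℕ → Fin n} {θ : ℕ → ℝ}
    (hJ : IsJacobiGSequence f g δ Q i j θ) :
    ∃ Qs : Matrix (Fin n) (Fin n) ℝ, Qsᵀ * Qs = 1 ∧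
      Tendsto (fun k => frobR (Q k - Qs)) atTop (nhds 0) ∧ projGradR g Qs = 0 := by
  have hθ := hJ.summable_abs_angle hf hfour hg hδ
  obtain ⟨Qs, hQs⟩ := hJ.exists_tendsto hθ
  refine ⟨Qs, ?_, ?_, frobR_eq_zero.1 ?_⟩
  · have hclosed : IsClosed {X : Matrix (Fin n) (Fin n) ℝ | Xᵀ * X = 1} :=
      isClosed_eq (by fun_prop) continuous_const
    exact hclosed.mem_of_tendsto hQs (.of_forall hJ.orthogonal)
  · have hdist := (continuous_frobR.tendsto _).comp (hQs.sub_const Qs)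
    rwa [sub_self, frobR_eq_zero.2 rfl] at hdist
  · have hcont := continuous_frobR.comp
      (IsMatrixPolynomial.continuous_projGradR (hf.gradient_apply hg))
    exact tendsto_nhds_unique ((hcont.tendsto Qs).comp hQs)
      (hJ.tendsto_frobR_projGradR hf hfour hδ hθ)

/-- Global convergence of the Jacobi-G algorithm on O(n) for the simultaneous approximate
diagonalization cost of symmetric third-order tensors: for any starting point, the Jacobi-G
iterates converge to a single limit point, which is a stationary point of `f` on O(n). -/
theorem jacobiG_global_convergence_order3 {n L : ℕ}
    (A : Fin L → Fin n → Fin n → Fin n → ℝ)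
    (hsym : ∀ ℓ a b c, A ℓ a b c = A ℓ b a c ∧ A ℓ a b c = A ℓ a c b)
    (f : Matrix (Fin n) (Fin n) ℝ → ℝ)
    (hf : ∀ Q : Matrix (Fin n) (Fin n) ℝ, f Q =
      ∑ ℓ, ∑ k, (∑ a, ∑ b, ∑ c, A ℓ a b c * Q a k * Q b k * Q c k) ^ 2)
    (g : Matrix (Fin n) (Fin n) ℝ → Matrix (Fin n) (Fin n) ℝ)
    (hg : IsGradR f g)
    (δ : ℝ) (hδ0 : 0 < δ) (hδn : δ < 2 / (n : ℝ))
    (Q : ℕ → Matrix (Fin n) (Fin n) ℝ) (hQ0 : (Q 0)ᵀ * Q 0 = 1)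
    (i j : ℕ → Fin n) (θ : ℕ → ℝ)
    (hij : ∀ k, i k < j k)
    (hupd : ∀ k, Q (k + 1) = Q k * givensR n (i k) (j k) (θ k))
    (hpair : ∀ k, δ * frobR (projGradR g (Q k)) ≤
      |deriv (fun t : ℝ => f (Q k * givensR n (i k) (j k) t)) 0|)
    (hmax : ∀ k t, f (Q k * givensR n (i k) (j k) t) ≤ f (Q (k + 1)))
    (hminabs : ∀ k t, (∀ s, f (Q k * givensR n (i k) (j k) s) ≤
        f (Q k * givensR n (i k) (j k) t)) → |θ k| ≤ |t|) :
    ∃ Qs : Matrix (Fin n) (Fin n) ℝ, Qsᵀ * Qs = 1 ∧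
      Tendsto (fun k => frobR (Q k - Qs)) atTop (nhds 0) ∧
      projGradR g Qs = 0 := by
  have hsum : f = fun X => ∑ ℓ, JacobiG.diagonalCost (A ℓ) X := funext hf
  have hpoly : JacobiG.IsMatrixPolynomial f := hsum ▸
    JacobiG.IsPolynomialFun.sum fun ℓ => JacobiG.isMatrixPolynomial_diagonalCost (A ℓ)
  have hfour : JacobiG.HasFourthHarmonicRotations f := hsum ▸ fun X _ _ hne =>
    .sum fun ℓ _ => JacobiG.isFourthHarmonic_diagonalCost (A ℓ) X hne
  exact jacobiG_global_convergence_order3_general hpoly hfour hg hδ0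
    ⟨hQ0, fun k => (hij k).ne, hupd, hpair, fun k =>
      ⟨fun t => (hmax k t).trans_eq (congrArg f (hupd k)), hminabs k⟩⟩
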